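/- arXiv:1807.06791 — 3 statements merged into one kernel-verified Lean document; each statement's English description precedes it below -/
import Mathlib

section
/- Let k ≥ 1 be an integer. Let a be a normalized Hecke eigensystem of weight 2k and let b be a normalized Hecke eigensystem of weight 2k+8. Then Σ_{n=1}^∞ a(n)·conj(b(n))·n^{−(2k+7)} ≠ 0. -/
open Complex Real
open scoped ComplexConjugate

noncomputable section

/-- `a : ℕ → ℂ` (with `a n` the `n`-th coefficient, `n ≥ 1`) is a normalized Hecke
eigensystem of weight `w`: `a 1 = 1`, the Hecke multiplicativity relations
`a m * a n = ∑_{d ∣ gcd(m,n)} d^{w-1} a(mn/d²)` hold, and Deligne's bound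
`|a p| ≤ 2 p^{(w-1)/2}` holds at every prime `p`. -/
def IsNormalizedHeckeEigensystem (w : ℕ) (a : ℕ → ℂ) : Prop :=
  a 1 = 1 ∧
  (∀ m n : ℕ, 1 ≤ m → 1 ≤ n →
      a m * a n = ∑ d ∈ (Nat.gcd m n).divisors, (d : ℂ) ^ (w - 1) * a (m * n / d ^ 2)) ∧
  (∀ p : ℕ, p.Prime → ‖a p‖ ≤ 2 * (p : ℝ) ^ (((w : ℝ) - 1) / 2))

/-!
A normalized coefficient `x r = a (p ^ r) / p ^ (r (w - 1) / 2)` satisfies `x 0 = 1`, `|x 1| ≤ 2`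
and `|x (r + 2)| ≤ 2 |x (r + 1)| + |x r|`, so `|x r| ≤ (1 + √2) ^ r`. As `1 + √2` is at most
`p ^ log₂ (1 + √2)`, multiplicativity turns this into a power bound for `a n`, and likewise for
`b n`.

A multiplicative series whose terms are at most `n ^ y` in norm, with `y < -1`, converges absolutely
to its Euler product. As `p ^ y < 1 / 2`, the terms with `r ≥ 1` of each Euler factor add up to less
than the leading `1`, so no factor vanishes, and neither does the product. The Rankin–Selberg value
is in this range because `(1 + √2) ^ 2 < 8`.
-/

theorem tsum_ne_zero_of_norm_add_one_le_geometric {E : Type*} [NormedAddCommGroup E]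
    [CompleteSpace E] {u : ℕ → E} {q : ℝ} (hu0 : u 0 ≠ 0) (hq0 : 0 ≤ q) (hq : q < 1 / 2)
    (hu : ∀ r, ‖u (r + 1)‖ ≤ ‖u 0‖ * q ^ (r + 1)) : ∑' r, u r ≠ 0 := by
  have hgeom : HasSum (fun r ↦ ‖u 0‖ * q ^ (r + 1)) (‖u 0‖ * (q * (1 - q)⁻¹)) := by
    simpa only [pow_succ'] using
      ((hasSum_geometric_of_lt_one hq0 (by linarith)).mul_left q).mul_left ‖u 0‖
  have hsum : Summable u := (summable_nat_add_iff 1).mp (hgeom.summable.of_norm_bounded hu)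
  have htail : ‖∑' r, u (r + 1)‖ < ‖u 0‖ := by
    refine (tsum_of_norm_bounded hgeom hu).trans_lt ?_
    refine mul_lt_of_lt_one_right (norm_pos_iff.mpr hu0) ?_
    rw [← div_eq_mul_inv, div_lt_one] <;> linarith
  intro h
  rw [hsum.tsum_eq_zero_add] at h
  rw [eq_neg_of_add_eq_zero_left h, norm_neg] at htail
  exact htail.false

theorem le_pow_of_le_mul_add_mul {R : Type*} [CommSemiring R] [PartialOrder R]
    [IsOrderedRing R] {u : ℕ → R} {A B x : R} (hA : 0 ≤ A) (hB : 0 ≤ B) (hx0 : 0 ≤ x)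
    (hx : A * x + B ≤ x ^ 2) (hu0 : u 0 ≤ 1) (hu1 : u 1 ≤ x)
    (hu : ∀ r, u (r + 2) ≤ A * u (r + 1) + B * u r) (r : ℕ) : u r ≤ x ^ r := by
  induction r using Nat.twoStepInduction with
  | zero => simpa using hu0
  | one => simpa using hu1
  | more r ih ih' =>
    calc u (r + 2) ≤ A * u (r + 1) + B * u r := hu r
      _ ≤ A * x ^ (r + 1) + B * x ^ r := by gcongr
      _ = x ^ r * (A * x + B) := by ring
      _ ≤ x ^ r * x ^ 2 := by gcongr
      _ = x ^ (r + 2) := (pow_add x r 2).symm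

theorem summable_tsum_primes_pow_add_one {E : Type*} [NormedAddCommGroup E] [CompleteSpace E]
    {f : ℕ → E} (hf : Summable (‖f ·‖)) :
    Summable fun p : Nat.Primes ↦ ‖∑' e, f (p ^ (e + 1))‖ := by
  have hinj : Function.Injective fun x : Nat.Primes × ℕ ↦ (x.1 : ℕ) ^ (x.2 + 1) :=
    Subtype.val_injective.comp Nat.Primes.prodNatEquiv.injective
  have hpairs := hf.comp_injective hinj
  exact hpairs.prod.of_nonneg_of_le (fun _ ↦ norm_nonneg _)
    fun p ↦ norm_tsum_le_tsum_norm (hpairs.prod_factor p)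

section EulerProduct

variable {R : Type*} [NormedCommRing R] [NormOneClass R] [NormMulClass R] [CompleteSpace R]
  {f : ℕ → R}

theorem tsum_ne_zero_of_eulerFactor_ne_zero (hf1 : f 1 = 1)
    (hmul : ∀ {m n}, Nat.Coprime m n → f (m * n) = f m * f n) (hsum : Summable (‖f ·‖))
    (hf0 : f 0 = 0) (hfactor : ∀ p, p.Prime → ∑' e, f (p ^ e) ≠ 0) : ∑' n, f n ≠ 0 := by
  have hsplit (p : Nat.Primes) : ∑' e, f (p ^ e) = 1 + ∑' e, f (p ^ (e + 1)) := by
    have hp : Summable fun e ↦ f (p ^ e) :=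
      (hsum.comp_injective (Nat.pow_right_injective p.2.two_le)).of_norm
    rw [hp.tsum_eq_zero_add, pow_zero, hf1]
  rw [← EulerProduct.eulerProduct_tprod hf1 hmul hsum hf0, tprod_congr hsplit]
  exact tprod_one_add_ne_zero_of_summable (fun p ↦ hsplit p ▸ hfactor p p.2)
    (summable_tsum_primes_pow_add_one hsum)

theorem tsum_multiplicative_ne_zero_of_norm_le_rpow {y : ℝ} (hy : y < -1) (hf1 : f 1 = 1)
    (hmul : ∀ {m n}, Nat.Coprime m n → f (m * n) = f m * f n)
    (hf : ∀ n, ‖f n‖ ≤ (n : ℝ) ^ y) : ∑' n, f n ≠ 0 := by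
  have hf0 : f 0 = 0 := by
    simpa [Real.zero_rpow (show y ≠ 0 by linarith)] using hf 0
  have hsum : Summable (‖f ·‖) :=
    (Real.summable_nat_rpow.mpr hy).of_nonneg_of_le (fun _ ↦ norm_nonneg _) hf
  refine tsum_ne_zero_of_eulerFactor_ne_zero hf1 hmul hsum hf0 fun p hp ↦ ?_
  have hp2 : (p : ℝ) ^ y < 1 / 2 :=
    calc (p : ℝ) ^ y ≤ 2 ^ y :=
          Real.rpow_le_rpow_of_nonpos two_pos (by exact_mod_cast hp.two_le) (by linarith)
      _ < 2 ^ (-1 : ℝ) := Real.rpow_lt_rpow_of_exponent_lt one_lt_two hy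
      _ = 1 / 2 := by rw [Real.rpow_neg_one, one_div]
  refine tsum_ne_zero_of_norm_add_one_le_geometric (norm_ne_zero_iff.mp (by simp [hf1]))
    (by positivity) hp2 fun r ↦ ?_
  simpa [hf1, Real.rpow_pow_comm] using hf (p ^ (r + 1))

end EulerProduct

theorem LSeries_term_mul_of_coprime {f : ArithmeticFunction ℂ} (hf : f.IsMultiplicative) (s : ℂ)
    {m n : ℕ} (hmn : m.Coprime n) :
    LSeries.term f s (m * n) = LSeries.term f s m * LSeries.term f s n := by
  rcases eq_or_ne m 0 with rfl | hm
  · simp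
  rcases eq_or_ne n 0 with rfl | hn
  · simp
  rw [LSeries.term_of_ne_zero (mul_ne_zero hm hn), LSeries.term_of_ne_zero hm,
    LSeries.term_of_ne_zero hn, hf.map_mul_of_coprime hmn, Nat.cast_mul,
    Complex.natCast_mul_natCast_cpow, mul_div_mul_comm]

theorem LSeries_ne_zero_of_isMultiplicative_of_norm_le_rpow {f : ArithmeticFunction ℂ}
    (hf : f.IsMultiplicative) {x : ℝ} (hfx : ∀ n, ‖f n‖ ≤ (n : ℝ) ^ x) {s : ℂ}
    (hs : x + 1 < s.re) : LSeries f s ≠ 0 := by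
  refine tsum_multiplicative_ne_zero_of_norm_le_rpow (y := x - s.re) (by linarith)
    (by simp [hf.map_one]) (LSeries_term_mul_of_coprime hf s) fun n ↦ ?_
  rcases eq_or_ne n 0 with rfl | hn
  · simpa using Real.rpow_nonneg le_rfl _
  rw [LSeries.norm_term_eq, if_neg hn, Real.rpow_sub (by positivity)]
  gcongr
  exact hfx n

theorem LSeries_pmul_ne_zero_of_isMultiplicative_of_norm_le_rpow {f g : ArithmeticFunction ℂ}
    (hf : f.IsMultiplicative) (hg : g.IsMultiplicative) {x y : ℝ}
    (hfx : ∀ n, ‖f n‖ ≤ (n : ℝ) ^ x) (hgy : ∀ n, ‖g n‖ ≤ (n : ℝ) ^ y) {s : ℂ}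
    (hs : x + y + 1 < s.re) : LSeries (f.pmul g) s ≠ 0 := by
  refine LSeries_ne_zero_of_isMultiplicative_of_norm_le_rpow (hf.pmul hg) (fun n ↦ ?_) hs
  rcases eq_or_ne n 0 with rfl | hn
  · simpa using Real.rpow_nonneg le_rfl _
  rw [ArithmeticFunction.pmul_apply, norm_mul, Real.rpow_add (by positivity)]
  exact mul_le_mul (hfx n) (hgy n) (norm_nonneg _) (by positivity)

theorem toArithmeticFunction_of_ne_zero {R : Type*} [Zero R] {f : ℕ → R} {n : ℕ} (hn : n ≠ 0) :
    toArithmeticFunction f n = f n :=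
  if_neg hn

theorem norm_le_rpow_of_norm_prime_pow_le {R : Type*} [SeminormedRing R]
    {f : ArithmeticFunction R} (hf : f.IsMultiplicative) {x : ℝ}
    (hfx : ∀ p r, p.Prime → ‖f (p ^ r)‖ ≤ ((p ^ r : ℕ) : ℝ) ^ x) (n : ℕ) :
    ‖f n‖ ≤ (n : ℝ) ^ x := by
  induction n using Nat.recOnPrimeCoprime with
  | zero => simpa using Real.rpow_nonneg le_rfl x
  | prime_pow p r hp => exact hfx p r hp
  | coprime m n _ _ hmn ihm ihn =>
    rw [hf.map_mul_of_coprime hmn, Nat.cast_mul, Real.mul_rpow (by positivity) (by positivity)]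
    exact (norm_mul_le _ _).trans (by gcongr)

namespace IsNormalizedHeckeEigensystem

variable {w : ℕ} {a : ℕ → ℂ}

theorem map_prime_pow_add_two (ha : IsNormalizedHeckeEigensystem w a) {p : ℕ} (hp : p.Prime)
    (r : ℕ) : a (p ^ (r + 2)) = a p * a (p ^ (r + 1)) - (p : ℂ) ^ (w - 1) * a (p ^ r) := by
  have hgcd : Nat.gcd p (p ^ (r + 1)) = p := Nat.gcd_eq_left (dvd_pow_self p r.succ_ne_zero)
  have hdiv : p * p ^ (r + 1) / p ^ 2 = p ^ r :=
    Nat.div_eq_of_eq_mul_left (pow_pos hp.pos 2) (by ring)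
  rw [ha.2.1 p (p ^ (r + 1)) hp.one_le (Nat.one_le_pow _ _ hp.pos), hgcd,
    Nat.Prime.sum_divisors hp, hdiv, ← pow_succ']
  simp

theorem map_mul_of_coprime (ha : IsNormalizedHeckeEigensystem w a) {m n : ℕ} (hm : m ≠ 0)
    (hn : n ≠ 0) (hmn : m.Coprime n) : a (m * n) = a m * a n := by
  simp [ha.2.1 m n (Nat.pos_of_ne_zero hm) (Nat.pos_of_ne_zero hn), hmn.gcd_eq_one]

theorem isMultiplicative (ha : IsNormalizedHeckeEigensystem w a) :
    (toArithmeticFunction a).IsMultiplicative := by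
  refine ArithmeticFunction.IsMultiplicative.iff_ne_zero.mpr
    ⟨by simp [toArithmeticFunction_of_ne_zero, ha.1], ?_⟩
  intro m n hm hn hmn
  rw [toArithmeticFunction_of_ne_zero (mul_ne_zero hm hn), toArithmeticFunction_of_ne_zero hm,
    toArithmeticFunction_of_ne_zero hn, ha.map_mul_of_coprime hm hn hmn]

theorem star (ha : IsNormalizedHeckeEigensystem w a) :
    IsNormalizedHeckeEigensystem w (star a) := by
  refine ⟨by simp [ha.1], fun m n hm hn ↦ ?_, fun p hp ↦ by simpa using ha.2.2 p hp⟩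
  simpa using congrArg (starRingEnd ℂ) (ha.2.1 m n hm hn)

-- `1 + √2` is the positive root of `x ^ 2 = 2 * x + 1`. The familiar factor `r + 1` is not
-- available for complex `a p`: if `a p = 2 * I * p ^ ((w - 1) / 2)`, then
-- `‖a (p ^ 2)‖ = 5 * p ^ (w - 1)`.
theorem norm_map_prime_pow_le (ha : IsNormalizedHeckeEigensystem w a) (hw : 1 ≤ w) {p : ℕ}
    (hp : p.Prime) (r : ℕ) :
    ‖a (p ^ r)‖ ≤ ((1 + √2) * (p : ℝ) ^ (((w : ℝ) - 1) / 2)) ^ r := by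
  set t : ℝ := (p : ℝ) ^ (((w : ℝ) - 1) / 2)
  have ht2 : t ^ 2 = (p : ℝ) ^ (w - 1) := by
    rw [← Real.rpow_mul_natCast p.cast_nonneg, ← Real.rpow_natCast, Nat.cast_sub hw]
    congr 1
    push_cast
    ring
  have hap : ‖a p‖ ≤ 2 * t := ha.2.2 p hp
  refine le_pow_of_le_mul_add_mul (u := fun r ↦ ‖a (p ^ r)‖) (A := 2 * t) (B := t ^ 2)
    (by positivity) (by positivity) (by positivity) ?_ (by simp [ha.1]) ?_ (fun r ↦ ?_) r
  · exact le_of_eq (by linear_combination (-t ^ 2) * Real.sq_sqrt (zero_le_two (α := ℝ)))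
  · have h2 : (2 : ℝ) ≤ 1 + √2 := by linarith [Real.one_lt_sqrt_two]
    simpa using hap.trans (by gcongr)
  · rw [ha.map_prime_pow_add_two hp, ht2]
    refine (norm_sub_le _ _).trans ?_
    rw [norm_mul, norm_mul, norm_pow, Complex.norm_natCast]
    gcongr

theorem norm_map_le_rpow (ha : IsNormalizedHeckeEigensystem w a) (hw : 1 ≤ w) (n : ℕ) :
    ‖toArithmeticFunction a n‖ ≤ (n : ℝ) ^ (((w : ℝ) - 1) / 2 + Real.logb 2 (1 + √2)) := by
  refine norm_le_rpow_of_norm_prime_pow_le ha.isMultiplicative (fun p r hp ↦ ?_) n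
  have hp0 : (0 : ℝ) < p := by exact_mod_cast hp.pos
  have hlogb : 0 ≤ Real.logb 2 (1 + √2) :=
    Real.logb_nonneg one_lt_two (by linarith [Real.sqrt_nonneg 2])
  have hsilver : 1 + √2 ≤ (p : ℝ) ^ Real.logb 2 (1 + √2) :=
    calc 1 + √2 = 2 ^ Real.logb 2 (1 + √2) :=
          (Real.rpow_logb two_pos (by norm_num) (by positivity)).symm
      _ ≤ (p : ℝ) ^ Real.logb 2 (1 + √2) := by
          gcongr
          exact_mod_cast hp.two_le
  calc ‖toArithmeticFunction a (p ^ r)‖ = ‖a (p ^ r)‖ := by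
        rw [toArithmeticFunction_of_ne_zero (pow_ne_zero r hp.ne_zero)]
    _ ≤ ((1 + √2) * (p : ℝ) ^ (((w : ℝ) - 1) / 2)) ^ r := ha.norm_map_prime_pow_le hw hp r
    _ ≤ ((p : ℝ) ^ Real.logb 2 (1 + √2) * (p : ℝ) ^ (((w : ℝ) - 1) / 2)) ^ r := by gcongr
    _ = ((p ^ r : ℕ) : ℝ) ^ (((w : ℝ) - 1) / 2 + Real.logb 2 (1 + √2)) := by
        rw [← Real.rpow_add hp0, Real.rpow_pow_comm hp0.le, Nat.cast_pow, add_comm]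

end IsNormalizedHeckeEigensystem

theorem LSeries_natCast_eq_tsum (f : ℕ → ℂ) (s : ℕ) :
    LSeries f s = ∑' n : ℕ, f (n + 1) / ((n : ℂ) + 1) ^ s := by
  have hsupp : Function.support (LSeries.term f s) ⊆ Set.range Nat.succ := by
    rintro (_ | n) hn
    · simp at hn
    · exact ⟨n, rfl⟩
  rw [LSeries, ← Nat.succ_injective.tsum_eq hsupp]
  simp [LSeries.term_of_ne_zero]

theorem two_mul_logb_two_one_add_sqrt_two_lt_three : 2 * Real.logb 2 (1 + √2) < 3 := by
  have hsq : (1 + √2) ^ 2 < 8 := by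
    nlinarith [Real.sq_sqrt (zero_le_two (α := ℝ)), Real.sqrt_two_lt_three_halves]
  calc 2 * Real.logb 2 (1 + √2) = Real.logb 2 ((1 + √2) ^ 2) := by
        rw [Real.logb_pow, Nat.cast_ofNat]
    _ < Real.logb 2 8 := Real.logb_lt_logb one_lt_two (by positivity) hsq
    _ = 3 := by
        rw [show (8 : ℝ) = 2 ^ 3 by norm_num, Real.logb_pow, Real.logb_self_eq_one one_lt_two]
        norm_num

theorem rankin_selberg_value_ne_zero_general {v w : ℕ} (hv : 1 ≤ v) (hw : 1 ≤ w) {a b : ℕ → ℂ}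
    (ha : IsNormalizedHeckeEigensystem v a) (hb : IsNormalizedHeckeEigensystem w b) {s : ℂ}
    (hs : ((v : ℝ) + w) / 2 + 2 * Real.logb 2 (1 + √2) < s.re) :
    LSeries (fun n ↦ a n * conj (b n)) s ≠ 0 := by
  have hpmul {n : ℕ} (hn : n ≠ 0) :
      a n * conj (b n) = (toArithmeticFunction a).pmul (toArithmeticFunction (star b)) n := by
    simp [toArithmeticFunction_of_ne_zero hn]
  rw [LSeries_congr hpmul]
  exact LSeries_pmul_ne_zero_of_isMultiplicative_of_norm_le_rpow ha.isMultiplicative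
    hb.star.isMultiplicative (ha.norm_map_le_rpow hv) (hb.star.norm_map_le_rpow hw) (by linarith)

/-- If `a` is a normalized Hecke eigensystem of weight `2k` and `b` one of weight `2k+8`,
then `∑_{n≥1} a(n) conj(b(n)) n^{-(2k+7)} ≠ 0`. -/
theorem rankin_selberg_value_ne_zero (k : ℕ) (hk : 1 ≤ k) (a b : ℕ → ℂ)
    (ha : IsNormalizedHeckeEigensystem (2 * k) a)
    (hb : IsNormalizedHeckeEigensystem (2 * k + 8) b) :
    (∑' n : ℕ, a (n + 1) * conj (b (n + 1)) / ((n : ℂ) + 1) ^ (2 * k + 7)) ≠ 0 := by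
  have hlogb := two_mul_logb_two_one_add_sqrt_two_lt_three
  rw [← LSeries_natCast_eq_tsum fun n ↦ a n * conj (b n)]
  exact rankin_selberg_value_ne_zero_general (by omega) (by omega) ha hb
    (by rw [Complex.natCast_re]; push_cast; linarith)

end
end

section
/- Let N ≥ 1 and k ≥ 1 be integers, let f be a cusp form of weight 2k for Γ₀(N) with Fourier coefficients a(n) and g a cusp form of weight 2k+8 for Γ₀(N) with Fourier coefficients b(n). Let E₈^{(N)}(τ) = Σ_{γ ∈ Γ∞\Γ₀(N)} j(γ,τ)^{−8}, and let F be a measurable fundamental domain for the action of Γ₀(N) on ℍ. Then ∫_F f(τ)·conj(g(τ))·E₈^{(N)}(τ)·(Im τ)^{2k+8} d*τ = (4π)^{−(2k+7)}·Γ(2k+7)·Σ_{n=1}^∞ a(n)·conj(b(n))·n^{−(2k+7)}. -/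
open Complex MeasureTheory Real Set Filter
open scoped ComplexConjugate MatrixGroups

noncomputable section

/-- The upper half-plane, as a subset of `ℂ`. -/
def UHP : Set ℂ := {τ | 0 < τ.im}

/-- The Möbius action `τ ↦ (aτ+b)/(cτ+d)` of `γ = (a b; c d) ∈ SL₂(ℤ)` on the
upper half-plane. -/
def moeb (γ : SL(2, ℤ)) (τ : ℂ) : ℂ :=
  (((γ.1 0 0 : ℤ) : ℂ) * τ + ((γ.1 0 1 : ℤ) : ℂ)) /
    (((γ.1 1 0 : ℤ) : ℂ) * τ + ((γ.1 1 1 : ℤ) : ℂ))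

/-- `f` is a cusp form of (even) weight `w` for `Γ₀(N)` with Fourier coefficients `a`:
it is holomorphic on the upper half-plane, transforms with weight `w` under `Γ₀(N)`,
vanishes at every cusp, and has the absolutely convergent Fourier expansion
`f τ = ∑_{n ≥ 1} a n e^{2πinτ}`. -/
def IsCuspFormGamma0 (N : ℕ) (w : ℕ) (f : ℂ → ℂ) (a : ℕ → ℂ) : Prop :=
  DifferentiableOn ℂ f UHP ∧
  (∀ γ ∈ CongruenceSubgroup.Gamma0 N, ∀ τ ∈ UHP,
      f (moeb γ τ)
        = (((γ.1 1 0 : ℤ) : ℂ) * τ + ((γ.1 1 1 : ℤ) : ℂ)) ^ w * f τ) ∧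
  (∀ γ : SL(2, ℤ),
      Tendsto (fun τ : ℂ =>
          ((((γ.1 1 0 : ℤ) : ℂ) * τ + ((γ.1 1 1 : ℤ) : ℂ)) ^ (-(w : ℤ))) * f (moeb γ τ))
        (Filter.comap Complex.im Filter.atTop) (nhds 0)) ∧
  (∀ τ ∈ UHP,
      HasSum (fun n : ℕ => a (n + 1) * Complex.exp (2 * π * I * (n + 1) * τ)) (f τ)) ∧
  (∀ τ ∈ UHP,
      Summable (fun n : ℕ => ‖a (n + 1) * Complex.exp (2 * π * I * (n + 1) * τ)‖))

/-- The subgroup `Γ∞ = {(a b; 0 d) ∈ SL₂(ℤ)}` of upper triangular matrices. -/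
def GammaInf : Subgroup SL(2, ℤ) where
  carrier := {γ | γ.1 1 0 = 0}
  one_mem' := by simp
  mul_mem' := by
    intro x y hx hy
    have h := (Matrix.two_mul_expl x.1 y.1).2.2.1
    simp only [Set.mem_setOf_eq] at *
    simp [Matrix.SpecialLinearGroup.coe_mul, h, hx, hy]
  inv_mem' := by
    intro x hx
    simp only [Set.mem_setOf_eq] at *
    rw [Matrix.SpecialLinearGroup.SL2_inv_expl x]
    simpa using hx

private lemma jsq_aux (η x y : SL(2, ℤ)) (hyx : y = η * x) (hη10 : η.1 1 0 = 0) (τ : ℂ) :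
    (((x.1 1 0 : ℤ) : ℂ) * τ + ((x.1 1 1 : ℤ) : ℂ)) ^ 2
      = (((y.1 1 0 : ℤ) : ℂ) * τ + ((y.1 1 1 : ℤ) : ℂ)) ^ 2 := by
  have h10 : y.1 1 0 = η.1 1 1 * x.1 1 0 := by
    have h2 := (Matrix.two_mul_expl η.1 x.1).2.2.1
    rw [hyx]
    simp only [Matrix.SpecialLinearGroup.coe_mul]
    rw [h2, hη10]; ring
  have h11 : y.1 1 1 = η.1 1 1 * x.1 1 1 := by
    have h2 := (Matrix.two_mul_expl η.1 x.1).2.2.2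
    rw [hyx]
    simp only [Matrix.SpecialLinearGroup.coe_mul]
    rw [h2, hη10]; ring
  have hdet : η.1 0 0 * η.1 1 1 = 1 := by
    have hd := η.2
    rw [Matrix.det_fin_two] at hd
    rw [hη10] at hd; linarith
  have hsq : (((η.1 1 1 : ℤ) : ℂ)) ^ 2 = 1 := by
    have hdet' : η.1 1 1 * η.1 0 0 = 1 := by linarith
    rcases Int.eq_one_or_neg_one_of_mul_eq_one hdet' with h1 | h1 <;> rw [h1] <;> norm_num
  have hkey : ((y.1 1 0 : ℤ) : ℂ) * τ + ((y.1 1 1 : ℤ) : ℂ)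
      = ((η.1 1 1 : ℤ) : ℂ) * (((x.1 1 0 : ℤ) : ℂ) * τ + ((x.1 1 1 : ℤ) : ℂ)) := by
    rw [h10, h11]; push_cast; ring
  rw [hkey, mul_pow, hsq, one_mul]

/-- The square `j(γ,τ)² = (cτ+d)²` of the automorphy factor, as a well-defined function on
the set `Γ∞\Γ₀(N)` of right cosets `Γ∞γ`. -/
def jsqN (N : ℕ) (τ : ℂ) :
    Quotient (QuotientGroup.rightRel (GammaInf.subgroupOf (CongruenceSubgroup.Gamma0 N))) → ℂ :=
  Quotient.lift
    (fun γ : CongruenceSubgroup.Gamma0 N =>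
      (((γ.1.1 1 0 : ℤ) : ℂ) * τ + ((γ.1.1 1 1 : ℤ) : ℂ)) ^ 2)
    (by
      intro x y hxy
      have h : y * x⁻¹ ∈ GammaInf.subgroupOf (CongruenceSubgroup.Gamma0 N) :=
        QuotientGroup.rightRel_apply.mp hxy
      have hη : ((y * x⁻¹ : CongruenceSubgroup.Gamma0 N) : SL(2, ℤ)) ∈ GammaInf :=
        Subgroup.mem_subgroupOf.mp h
      exact jsq_aux ((y * x⁻¹ : CongruenceSubgroup.Gamma0 N) : SL(2, ℤ)) x.1 y.1
        (by push_cast; group) hη τ)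

/-- The weight-8 Eisenstein series
`E₈^{(N)}(τ) = ∑_{γ ∈ Γ∞\Γ₀(N)} j(γ,τ)^{-8}` attached to the cusp `∞` of `Γ₀(N)`
(written via `j(γ,τ)^{-8} = (j(γ,τ)²)^{-4}`). -/
def E8N (N : ℕ) (τ : ℂ) : ℂ :=
  ∑' q : Quotient (QuotientGroup.rightRel (GammaInf.subgroupOf (CongruenceSubgroup.Gamma0 N))),
    jsqN N τ q ^ (-4 : ℤ)

/-- The hyperbolic measure `d*τ = dx dy / y²` on the upper half-plane (as a measure on `ℂ`). -/
def hypMeasure : Measure ℂ :=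
  volume.withDensity fun τ => ENNReal.ofReal ((τ.im ^ 2)⁻¹)

/-- `F` is a measurable fundamental domain for the action of `Γ₀(N)` on the upper
half-plane: it is a measurable subset of `ℍ`, almost every point of `ℍ` has a
`Γ₀(N)`-translate in `F`, and distinct translates of `F` (by elements other than `±1`,
which act trivially) overlap in measure zero. -/
def IsFundamentalDomainGamma0 (N : ℕ) (F : Set ℂ) : Prop :=
  MeasurableSet F ∧ F ⊆ UHP ∧
  (∀ᵐ τ ∂(volume.restrict UHP), ∃ γ ∈ CongruenceSubgroup.Gamma0 N, moeb γ τ ∈ F) ∧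
  (∀ γ ∈ CongruenceSubgroup.Gamma0 N, γ ≠ 1 → γ ≠ -1 →
      volume (F ∩ {τ | moeb γ τ ∈ F}) = 0)

/-!
Almost every point of `ℍ` is carried into `F` by exactly two elements `±γ` of `Γ₀(N)`, and for
every `τ` each coset in `Γ∞\Γ₀(N)` contains exactly two elements carrying `τ` into the strip
`0 < Re τ ≤ 1`. Let `h(τ) = f(τ) · conj (g(τ)) · (Im τ) ^ (2k+8)`, which satisfies
`h(γτ) = j(γ,τ)⁻⁸ h(τ)`, and integrate over `F` the sum over `Γ₀(N)` of the translates of `h`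
restricted to the strip. By the second count the integrand is `2 · E₈ · h`; by the first, the result
is twice the integral of `h` over the strip. There the integral over `Re τ` keeps only the diagonal
of the product of the two Fourier series, and the integral over `Im τ` is a Gamma integral. Hecke's
bound `a(n) = O(n ^ (w/2))` makes the double series absolutely convergent.
-/

open scoped ENNReal UpperHalfPlane

section IntegrableSeries

variable {α ι E : Type*} [MeasurableSpace α] {μ : Measure α} [Countable ι] [NormedAddCommGroup E]
  {u : ι → α → E}

lemma lintegral_tsum_enorm_lt_top (hu : ∀ i, Integrable (u i) μ)
    (hnorm : Summable fun i ↦ ∫ x, ‖u i x‖ ∂μ) : ∫⁻ x, ∑' i, ‖u i x‖ₑ ∂μ < ∞ := by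
  rw [lintegral_tsum fun i ↦ (hu i).aestronglyMeasurable.enorm]
  simp_rw [← ofReal_integral_norm_eq_lintegral_enorm (hu _)]
  exact hnorm.tsum_ofReal_lt_top

lemma ae_summable_of_summable_integral_norm [CompleteSpace E] (hu : ∀ i, Integrable (u i) μ)
    (hnorm : Summable fun i ↦ ∫ x, ‖u i x‖ ∂μ) : ∀ᵐ x ∂μ, Summable fun i ↦ u i x := by
  filter_upwards [ae_lt_top' (AEMeasurable.tsum fun i ↦ (hu i).aestronglyMeasurable.enorm)
    (lintegral_tsum_enorm_lt_top hu hnorm).ne] with x hx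
  exact .of_norm (by simpa using ENNReal.summable_toReal hx.ne)

lemma integrable_of_hasSum_of_summable_integral_norm {s : α → E} (hu : ∀ i, Integrable (u i) μ)
    (hnorm : Summable fun i ↦ ∫ x, ‖u i x‖ ∂μ) (hs : ∀ᵐ x ∂μ, HasSum (fun i ↦ u i x) (s x)) :
    Integrable s μ := by
  refine ⟨aestronglyMeasurable_of_tendsto_ae atTop
    (fun t : Finset ι ↦ (integrable_finsetSum t fun i _ ↦ hu i).aestronglyMeasurable) hs, ?_⟩
  refine (lintegral_mono_ae ?_).trans_lt (lintegral_tsum_enorm_lt_top hu hnorm)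
  filter_upwards [hs] with x hx
  exact hx.tsum_eq ▸ enorm_tsum_le_tsum_enorm

end IntegrableSeries

section Unfolding

variable {G α E : Type*} [Group G] [MulAction G α] [MeasurableSpace α]
  [MeasurableConstSMul G α] {μ : Measure α} [SMulInvariantMeasure G α μ]
  [NormedAddCommGroup E] {F : Set α} {m : ℕ} {φ : α → E}

lemma integrableOn_comp_smul (hφ : Integrable φ μ) (γ : G) :
    IntegrableOn (fun x ↦ φ (γ • x)) F μ :=
  ((measurePreserving_smul γ μ).integrable_comp_of_integrable hφ).integrableOn

variable [Countable G]

lemma sum_map_smul_restrict (hF : MeasurableSet F)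
    (hcount : ∀ᵐ x ∂μ, {γ : G | γ • x ∈ F}.encard = m) :
    Measure.sum (fun γ : G ↦ (μ.restrict F).map (γ • ·)) = (m : ℝ≥0∞) • μ := by
  ext s hs
  have translate (γ : G) : (μ.restrict F).map (γ • ·) s =
      ∫⁻ x in s, F.indicator 1 (γ⁻¹ • x) ∂μ := by
    have hFγ : MeasurableSet ((γ⁻¹ • · : α → α) ⁻¹' F) := measurable_const_smul γ⁻¹ hF
    calc (μ.restrict F).map (γ • ·) s
        = μ ((γ • · : α → α) ⁻¹' (s ∩ (γ⁻¹ • ·) ⁻¹' F)) := by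
          rw [Measure.map_apply (measurable_const_smul γ) hs,
            Measure.restrict_apply (measurable_const_smul γ hs)]
          congr 1
          ext x
          simp
      _ = μ (s ∩ (γ⁻¹ • ·) ⁻¹' F) := measure_preimage_smul μ γ _
      _ = ∫⁻ x in s, F.indicator 1 (γ⁻¹ • x) ∂μ := by
          rw [inter_comm, ← Measure.restrict_apply hFγ, ← lintegral_indicator_one hFγ]
          rfl
  have orbit_count (x : α) : ∑' γ : G, F.indicator (1 : α → ℝ≥0∞) (γ • x) =
      {γ : G | γ • x ∈ F}.encard := by
    rw [← ENNReal.tsum_set_one, tsum_subtype {γ : G | γ • x ∈ F} fun _ ↦ (1 : ℝ≥0∞)]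
    rfl
  calc Measure.sum (fun γ : G ↦ (μ.restrict F).map (γ • ·)) s
      = ∑' γ : G, ∫⁻ x in s, F.indicator 1 (γ⁻¹ • x) ∂μ := by
        simp_rw [Measure.sum_apply _ hs, translate]
    _ = ∑' γ : G, ∫⁻ x in s, F.indicator 1 (γ • x) ∂μ :=
        (Equiv.inv G).tsum_eq fun γ ↦ ∫⁻ x in s, F.indicator 1 (γ • x) ∂μ
    _ = ∫⁻ x in s, {γ : G | γ • x ∈ F}.encard ∂μ := by
        simp_rw [← orbit_count]
        exact (lintegral_tsum fun γ ↦
          ((measurable_one.indicator hF).comp (measurable_const_smul γ)).aemeasurable).symm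
    _ = ∫⁻ _ in s, m ∂μ :=
        lintegral_congr_ae (ae_restrict_of_ae (hcount.mono fun x hx ↦ by simp [hx]))
    _ = ((m : ℝ≥0∞) • μ) s := by simp

lemma integrable_sum_map_smul_restrict (hF : MeasurableSet F)
    (hcount : ∀ᵐ x ∂μ, {γ : G | γ • x ∈ F}.encard = m) (hφ : Integrable φ μ) :
    Integrable φ (Measure.sum fun γ : G ↦ (μ.restrict F).map (γ • ·)) := by
  rw [sum_map_smul_restrict hF hcount]
  exact hφ.smul_measure (by simp)

lemma summable_setIntegral_norm_smul (hF : MeasurableSet F)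
    (hcount : ∀ᵐ x ∂μ, {γ : G | γ • x ∈ F}.encard = m) (hφ : Integrable φ μ) :
    Summable fun γ : G ↦ ∫ x in F, ‖φ (γ • x)‖ ∂μ := by
  simpa only [(measurableEmbedding_const_smul _).integral_map] using
    (integrable_sum_map_smul_restrict hF hcount hφ).summable_integral

lemma ae_summable_comp_smul [CompleteSpace E] (hF : MeasurableSet F)
    (hcount : ∀ᵐ x ∂μ, {γ : G | γ • x ∈ F}.encard = m) (hφ : Integrable φ μ) :
    ∀ᵐ x ∂μ.restrict F, Summable fun γ : G ↦ φ (γ • x) :=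
  ae_summable_of_summable_integral_norm (integrableOn_comp_smul hφ)
    (summable_setIntegral_norm_smul hF hcount hφ)

lemma setIntegral_tsum_comp_smul [NormedSpace ℝ E] (hF : MeasurableSet F)
    (hcount : ∀ᵐ x ∂μ, {γ : G | γ • x ∈ F}.encard = m) (hφ : Integrable φ μ) :
    ∫ x in F, ∑' γ : G, φ (γ • x) ∂μ = m • ∫ x, φ x ∂μ := by
  calc ∫ x in F, ∑' γ : G, φ (γ • x) ∂μ
      = ∑' γ : G, ∫ x in F, φ (γ • x) ∂μ :=
        (integral_tsum_of_summable_integral_norm (integrableOn_comp_smul hφ)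
          (summable_setIntegral_norm_smul hF hcount hφ)).symm
    _ = ∫ x, φ x ∂(Measure.sum fun γ : G ↦ (μ.restrict F).map (γ • ·)) := by
        rw [integral_sum_measure (integrable_sum_map_smul_restrict hF hcount hφ)]
        simp_rw [(measurableEmbedding_const_smul _).integral_map]
    _ = m • ∫ x, φ x ∂μ := by
        rw [sum_map_smul_restrict hF hcount, integral_smul_measure, ENNReal.toReal_natCast,
          Nat.cast_smul_eq_nsmul]

end Unfolding

lemma tsum_indicator_comp_eq_nsmul_tsum {ι κ E : Type*} [NormedAddCommGroup E]
    [NormedSpace ℝ E] [CompleteSpace E] {S : Set ι} {p : ι → κ} {c : κ → E} {m : ℕ}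
    (hcount : ∀ j, (S ∩ p ⁻¹' {j}).encard = m) (hsum : Summable (S.indicator (c ∘ p))) :
    ∑' i, S.indicator (c ∘ p) i = m • ∑' j, c j := by
  have const_on_fiber (j : κ) :
      (S ∩ p ⁻¹' {j}).indicator (c ∘ p) = (S ∩ p ⁻¹' {j}).indicator fun _ ↦ c j :=
    indicator_congr fun i hi ↦ congrArg c hi.2
  have fiber_sum (j : κ) : ∑' i : p ⁻¹' {j}, S.indicator (c ∘ p) i = m • c j := by
    rw [tsum_subtype (p ⁻¹' {j}) (S.indicator (c ∘ p)), indicator_indicator, inter_comm,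
      const_on_fiber, ← tsum_subtype (S ∩ p ⁻¹' {j}) fun _ ↦ c j, tsum_const,
      Nat.card_coe_set_eq, Set.ncard, hcount, ENat.toNat_natCast]
  rw [← (hsum.hasSum.tsum_fiberwise p).tsum_eq]
  simp_rw [fiber_sum, ← Nat.cast_smul_eq_nsmul ℝ m, tsum_const_smul'']

section Action

instance : Countable SL(2, ℤ) :=
  haveI : Countable (Matrix (Fin 2) (Fin 2) ℤ) := inferInstanceAs (Countable (Fin 2 → Fin 2 → ℤ))
  Subtype.val_injective.countable

instance : MeasurableConstSMul SL(2, ℤ) ℍ :=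
  ⟨fun γ ↦ measurable_const_smul (Matrix.SpecialLinearGroup.mapGL ℝ γ)⟩

instance : SMulInvariantMeasure SL(2, ℤ) ℍ volume :=
  ⟨fun γ _ hs ↦ measure_preimage_smul_of_nullMeasurableSet hs.nullMeasurableSet
    (Matrix.SpecialLinearGroup.mapGL ℝ γ)⟩

lemma coe_mem_UHP (τ : ℍ) : (τ : ℂ) ∈ UHP := τ.im_pos

lemma range_coe_upperHalfPlane : range UpperHalfPlane.coe = UHP := by
  ext z
  exact ⟨fun ⟨τ, h⟩ ↦ h ▸ coe_mem_UHP τ, fun h ↦ ⟨⟨z, h⟩, rfl⟩⟩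

lemma measurableSet_UHP : MeasurableSet UHP :=
  measurableSet_lt measurable_const Complex.measurable_im

lemma moeb_coe (γ : SL(2, ℤ)) (τ : ℍ) : moeb γ τ = ((γ • τ : ℍ) : ℂ) := by
  rw [UpperHalfPlane.coe_specialLinearGroup_apply]
  simp [moeb]

lemma automorphyFactor_ne_zero (γ : SL(2, ℤ)) (τ : ℍ) :
    ((γ.1 1 0 : ℤ) : ℂ) * (τ : ℂ) + ((γ.1 1 1 : ℤ) : ℂ) ≠ 0 := by
  simpa [UpperHalfPlane.denom] using UpperHalfPlane.denom_ne_zero (γ : GL (Fin 2) ℝ) τ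

lemma measurePreserving_coe_hypMeasure :
    MeasurePreserving UpperHalfPlane.coe volume (hypMeasure.restrict UHP) := by
  refine ⟨UpperHalfPlane.measurable_coe, ?_⟩
  ext s hs
  rw [Measure.map_apply UpperHalfPlane.measurable_coe hs, UpperHalfPlane.volume_eq_lintegral,
    image_preimage_eq_inter_range, range_coe_upperHalfPlane, Measure.restrict_apply hs,
    hypMeasure, withDensity_apply _ (hs.inter measurableSet_UHP)]
  refine lintegral_congr fun z ↦ ?_
  rw [ENNReal.ofReal, ENNReal.coe_inj]
  ext
  rw [Real.coe_toNNReal _ (by positivity)]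
  simp

lemma setIntegral_hypMeasure {F : Set ℂ} (hF : MeasurableSet F) (hFU : F ⊆ UHP) (φ : ℂ → ℂ) :
    ∫ τ in F, φ τ ∂hypMeasure = ∫ τ in UpperHalfPlane.coe ⁻¹' F, φ (τ : ℂ) := by
  rw [measurePreserving_coe_hypMeasure.setIntegral_preimage_emb
    UpperHalfPlane.measurableEmbedding_coe, Measure.restrict_restrict hF, inter_eq_left.mpr hFU]

lemma ae_upperHalfPlane_of_ae_restrict_UHP {p : ℂ → Prop} (h : ∀ᵐ z ∂volume.restrict UHP, p z) :
    ∀ᵐ τ : ℍ, p τ :=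
  measurePreserving_coe_hypMeasure.quasiMeasurePreserving.ae
    (((withDensity_absolutelyContinuous _ _).restrict UHP).ae_le h)

end Action

section FundamentalDomain

lemma encard_setOf_eq_or_eq_neg {G : Type*} [Group G] [HasDistribNeg G] (hne : (-1 : G) ≠ 1)
    {H : Subgroup G} (hneg : -1 ∈ H) {h : G} (hh : h ∈ H) :
    {x : H | (x : G) = h ∨ (x : G) = -h}.encard = 2 := by
  have hh' : -h ∈ H := by simpa using mul_mem hneg hh
  have hpair : {x : H | (x : G) = h ∨ (x : G) = -h} = {⟨h, hh⟩, ⟨-h, hh'⟩} := by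
    ext x
    simp [Subtype.ext_iff]
  rw [hpair, encard_pair]
  intro heq
  refine hne (mul_right_cancel (b := h) ?_)
  rw [neg_one_mul, one_mul]
  exact (congrArg Subtype.val heq).symm

lemma neg_one_ne_one_SL2Z : (-1 : SL(2, ℤ)) ≠ 1 := by decide

lemma neg_one_mem_Gamma0 (N : ℕ) : -1 ∈ CongruenceSubgroup.Gamma0 N := by
  simp [CongruenceSubgroup.Gamma0_mem]

variable {N : ℕ} {F : Set ℂ}

lemma IsFundamentalDomainGamma0.ae_eq_or_eq_neg_of_smul_mem (hF : IsFundamentalDomainGamma0 N F) :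
    ∀ᵐ τ : ℍ, ∀ γ δ : CongruenceSubgroup.Gamma0 N, ((γ • τ : ℍ) : ℂ) ∈ F →
      ((δ • τ : ℍ) : ℂ) ∈ F → δ.1 = γ.1 ∨ δ.1 = -γ.1 := by
  obtain ⟨-, -, -, hdisj⟩ := hF
  simp_rw [ae_all_iff]
  intro γ δ
  by_cases heq : δ.1 = γ.1 ∨ δ.1 = -γ.1
  · exact ae_of_all _ fun _ _ _ ↦ heq
  rw [not_or] at heq
  have hnull : ∀ᵐ z : ℂ, z ∉ F ∩ {z | moeb (δ.1 * γ.1⁻¹) z ∈ F} :=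
    measure_eq_zero_iff_ae_notMem.mp <| hdisj _ (mul_mem δ.2 (inv_mem γ.2))
      (fun h ↦ heq.1 (mul_inv_eq_one.mp h))
      (fun h ↦ heq.2 (by simpa using mul_inv_eq_iff_eq_mul.mp h))
  filter_upwards [(measurePreserving_smul γ.1 (volume : Measure ℍ)).quasiMeasurePreserving.ae
    (ae_upperHalfPlane_of_ae_restrict_UHP (ae_restrict_of_ae hnull))] with τ hτ hγ hδ
  refine absurd ⟨hγ, ?_⟩ hτ
  rw [mem_ofPred_eq, moeb_coe, mul_smul, inv_smul_smul]
  exact hδ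

lemma IsFundamentalDomainGamma0.ae_encard_eq_two (hF : IsFundamentalDomainGamma0 N F) :
    ∀ᵐ τ : ℍ, {γ : CongruenceSubgroup.Gamma0 N | γ • τ ∈ UpperHalfPlane.coe ⁻¹' F}.encard = 2 := by
  filter_upwards [ae_upperHalfPlane_of_ae_restrict_UHP hF.2.2.1, hF.ae_eq_or_eq_neg_of_smul_mem]
    with τ ⟨γ₀, hγ₀, hmem⟩ hunique
  rw [moeb_coe] at hmem
  rw [← encard_setOf_eq_or_eq_neg neg_one_ne_one_SL2Z (neg_one_mem_Gamma0 N) hγ₀]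
  congr 1
  ext γ
  refine ⟨fun hγ ↦ hunique ⟨γ₀, hγ₀⟩ γ hmem hγ, ?_⟩
  rw [mem_ofPred_eq, mem_ofPred_eq, mem_preimage, Subgroup.smul_def]
  rintro (h | h)
  · rwa [h]
  · rwa [h, ModularGroup.SL_neg_smul]

end FundamentalDomain

section CuspCosets

/-- The strip `0 < Re τ ≤ 1`, a fundamental domain for the action of `Γ∞` on the upper
half-plane. -/
def strip : Set ℍ := {τ | τ.re ∈ Ioc 0 1}

lemma measurableSet_strip : MeasurableSet strip :=
  UpperHalfPlane.continuous_re.measurable measurableSet_Ioc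

lemma mem_GammaInf_iff {η : SL(2, ℤ)} :
    η ∈ GammaInf ↔ ∃ n : ℤ, η = ModularGroup.T ^ n ∨ η = -ModularGroup.T ^ n := by
  constructor
  · intro (h10 : η.1 1 0 = 0)
    have hdet := η.2
    rw [Matrix.det_fin_two, h10, mul_zero, sub_zero] at hdet
    rcases Int.eq_one_or_neg_one_of_mul_eq_one' hdet with ⟨h0, h1⟩ | ⟨h0, h1⟩
    · refine ⟨η.1 0 1, Or.inl ?_⟩
      ext i j
      rw [ModularGroup.coe_T_zpow]
      fin_cases i <;> fin_cases j <;> simp [h0, h1, h10]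
    · refine ⟨-η.1 0 1, Or.inr ?_⟩
      ext i j
      rw [Matrix.SpecialLinearGroup.coe_neg, ModularGroup.coe_T_zpow]
      fin_cases i <;> fin_cases j <;> simp [h0, h1, h10]
  · rintro ⟨n, rfl | rfl⟩ <;> change _ = (0 : ℤ) <;> simp [ModularGroup.coe_T_zpow]

lemma GammaInf_le_Gamma0 (N : ℕ) : GammaInf ≤ CongruenceSubgroup.Gamma0 N := by
  intro η (h10 : η.1 1 0 = 0)
  simp [CongruenceSubgroup.Gamma0_mem, h10]

lemma exists_zpow_forall_GammaInf_smul_mem_strip_iff (τ : ℍ) :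
    ∃ n : ℤ, ∀ η ∈ GammaInf,
      η • τ ∈ strip ↔ η = ModularGroup.T ^ n ∨ η = -ModularGroup.T ^ n := by
  obtain ⟨n, hn, hunique⟩ := existsUnique_add_zsmul_mem_Ioc (one_pos (α := ℝ)) τ.re 0
  have translate (m : ℤ) : ModularGroup.T ^ m • τ ∈ strip ↔ τ.re + m • (1 : ℝ) ∈ Ioc 0 (0 + 1) := by
    rw [strip, mem_ofPred_eq, ModularGroup.re_T_zpow_smul]
    simp
  refine ⟨n, fun η hη ↦ ⟨fun hτ ↦ ?_, ?_⟩⟩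
  · obtain ⟨m, rfl | rfl⟩ := mem_GammaInf_iff.mp hη
    · exact .inl (by rw [hunique m ((translate m).mp hτ)])
    · rw [ModularGroup.SL_neg_smul] at hτ
      exact .inr (by rw [hunique m ((translate m).mp hτ)])
  · rintro (rfl | rfl)
    · exact (translate n).mpr hn
    · rw [ModularGroup.SL_neg_smul]
      exact (translate n).mpr hn

/-- The set `Γ∞\Γ₀(N)` over which the Eisenstein series is summed. -/
abbrev CuspCosets (N : ℕ) : Type :=
  Quotient (QuotientGroup.rightRel (GammaInf.subgroupOf (CongruenceSubgroup.Gamma0 N)))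

variable {N : ℕ}

lemma cuspCosets_mk_eq_mk_iff {γ γ₀ : CongruenceSubgroup.Gamma0 N} :
    (Quotient.mk _ γ : CuspCosets N) = Quotient.mk _ γ₀ ↔ γ.1 * γ₀.1⁻¹ ∈ GammaInf := by
  rw [eq_comm, Quotient.eq, QuotientGroup.rightRel_apply, Subgroup.mem_subgroupOf]
  rfl

lemma encard_smul_mem_strip_inter_coset (τ : ℍ) (q : CuspCosets N) :
    ({γ : CongruenceSubgroup.Gamma0 N | γ • τ ∈ strip} ∩
      (fun γ ↦ (Quotient.mk _ γ : CuspCosets N)) ⁻¹' {q}).encard = 2 := by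
  obtain ⟨γ₀, rfl⟩ := Quotient.exists_rep q
  obtain ⟨n, hn⟩ := exists_zpow_forall_GammaInf_smul_mem_strip_iff (γ₀.1 • τ)
  have hT : ModularGroup.T ^ n ∈ GammaInf := mem_GammaInf_iff.mpr ⟨n, .inl rfl⟩
  rw [← encard_setOf_eq_or_eq_neg neg_one_ne_one_SL2Z (neg_one_mem_Gamma0 N)
    (mul_mem (GammaInf_le_Gamma0 N hT) γ₀.2)]
  congr 1
  ext γ
  have hsmul : γ • τ = (γ.1 * γ₀.1⁻¹) • γ₀.1 • τ := by
    rw [mul_smul, inv_smul_smul, Subgroup.smul_def]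
  rw [mem_inter_iff, mem_preimage, mem_singleton_iff, cuspCosets_mk_eq_mk_iff, mem_ofPred_eq,
    hsmul, mem_ofPred_eq, ← neg_mul, ← mul_inv_eq_iff_eq_mul, ← mul_inv_eq_iff_eq_mul]
  constructor
  · exact fun ⟨hstrip, hcoset⟩ ↦ (hn _ hcoset).mp hstrip
  · intro h
    have hcoset : γ.1 * γ₀.1⁻¹ ∈ GammaInf := mem_GammaInf_iff.mpr ⟨n, h⟩
    exact ⟨(hn _ hcoset).mpr h, hcoset⟩

lemma tsum_indicator_strip_smul {h : ℍ → ℂ} {τ : ℍ}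
    (hinv : ∀ γ : CongruenceSubgroup.Gamma0 N,
      h (γ • τ) = jsqN N τ (Quotient.mk _ γ) ^ (-4 : ℤ) * h τ)
    (hsum : Summable fun γ : CongruenceSubgroup.Gamma0 N ↦ strip.indicator h (γ • τ)) :
    ∑' γ : CongruenceSubgroup.Gamma0 N, strip.indicator h (γ • τ) = 2 * (E8N N τ * h τ) := by
  have heq : (fun γ : CongruenceSubgroup.Gamma0 N ↦ strip.indicator h (γ • τ)) =
      {γ : CongruenceSubgroup.Gamma0 N | γ • τ ∈ strip}.indicator
        ((fun q : CuspCosets N ↦ jsqN N τ q ^ (-4 : ℤ) * h τ) ∘ Quotient.mk _) := by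
    ext γ
    simp only [indicator, mem_ofPred_eq, hinv, Function.comp_apply]
  rw [heq] at hsum ⊢
  rw [tsum_indicator_comp_eq_nsmul_tsum (m := 2) (encard_smul_mem_strip_inter_coset τ) hsum,
    tsum_mul_right, nsmul_eq_mul, Nat.cast_ofNat]
  rfl

end CuspCosets

section StripMeasure

/-- The real and imaginary parts of a point of the upper half-plane, as coordinates. -/
def reIm (τ : ℍ) : ℝ × ℝ := (τ.re, τ.im)

/-- The vertical factor `dy / y²` of the hyperbolic measure, on the positive half-line. -/
def heightMeasure : Measure ℝ :=
  (volume.restrict (Ioi 0)).withDensity fun y ↦ ENNReal.ofReal ((y ^ 2)⁻¹)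

instance : SFinite heightMeasure := by
  unfold heightMeasure
  infer_instance

lemma measurableEmbedding_reIm : MeasurableEmbedding reIm :=
  Complex.measurableEquivRealProd.measurableEmbedding.comp UpperHalfPlane.measurableEmbedding_coe

lemma measurePreserving_equivRealProd_hypMeasure :
    MeasurePreserving Complex.measurableEquivRealProd hypMeasure
      ((volume : Measure (ℝ × ℝ)).withDensity fun z ↦ ENNReal.ofReal ((z.2 ^ 2)⁻¹)) := by
  refine ⟨Complex.measurableEquivRealProd.measurable, ?_⟩
  ext s hs
  rw [Complex.measurableEquivRealProd.map_apply, withDensity_apply _ hs, hypMeasure,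
    withDensity_apply _ (Complex.measurableEquivRealProd.measurable hs)]
  exact Complex.volume_preserving_equiv_real_prod.setLIntegral_comp_preimage_emb
    Complex.measurableEquivRealProd.measurableEmbedding
    (fun z : ℝ × ℝ ↦ ENNReal.ofReal ((z.2 ^ 2)⁻¹)) s

lemma measurePreserving_reIm : MeasurePreserving reIm volume (volume.prod heightMeasure) := by
  have hS : MeasurableSet ((univ : Set ℝ) ×ˢ Ioi (0 : ℝ)) := .prod .univ measurableSet_Ioi
  have hdensity : Measurable fun y : ℝ ↦ ENNReal.ofReal ((y ^ 2)⁻¹) := by fun_prop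
  have himage := measurePreserving_equivRealProd_hypMeasure.restrict_preimage hS
  have hUHP : Complex.measurableEquivRealProd ⁻¹' ((univ : Set ℝ) ×ˢ Ioi (0 : ℝ)) = UHP := by
    ext z
    simp [UHP]
  rw [hUHP, restrict_withDensity hS, Measure.volume_eq_prod, ← Measure.prod_restrict,
    Measure.restrict_univ, ← prod_withDensity_right hdensity] at himage
  exact himage.comp measurePreserving_coe_hypMeasure

lemma measurePreserving_reIm_strip :
    MeasurePreserving reIm (volume.restrict strip)
      ((volume.restrict (Ioc 0 1)).prod heightMeasure) := by
  have hS : MeasurableSet (Ioc (0 : ℝ) 1 ×ˢ (univ : Set ℝ)) := measurableSet_Ioc.prod .univ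
  have h := measurePreserving_reIm.restrict_preimage hS
  rw [← Measure.prod_restrict, Measure.restrict_univ, prod_univ] at h
  exact h

variable {𝕜 : Type*} [RCLike 𝕜] {u v : ℝ → 𝕜}

lemma integrableOn_strip_mul (hu : IntegrableOn u (Ioc 0 1)) (hv : Integrable v heightMeasure) :
    IntegrableOn (fun τ : ℍ ↦ u τ.re * v τ.im) strip :=
  (measurePreserving_reIm_strip.integrable_comp_emb measurableEmbedding_reIm).mpr (hu.mul_prod hv)

lemma setIntegral_strip_mul (u v : ℝ → 𝕜) :
    ∫ τ in strip, u τ.re * v τ.im = (∫ x in Ioc 0 1, u x) * ∫ y, v y ∂heightMeasure := by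
  rw [← integral_prod_mul]
  exact measurePreserving_reIm_strip.integral_comp measurableEmbedding_reIm fun z ↦ u z.1 * v z.2

end StripMeasure

section HeightIntegral

variable {s r : ℝ}

lemma inv_sq_mul_rpow_mul_exp {y : ℝ} (hy : 0 < y) :
    (y ^ 2)⁻¹ * (y ^ (s + 1) * Real.exp (-(r * y))) = y ^ (s - 1) * Real.exp (-(r * y)) := by
  rw [← mul_assoc, ← Real.rpow_natCast, ← Real.rpow_neg hy.le, ← Real.rpow_add hy]
  congr 2
  push_cast
  ring

lemma integrable_rpow_mul_exp_neg_heightMeasure (hs : 0 < s) (hr : 0 < r) :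
    Integrable (fun y ↦ y ^ (s + 1) * Real.exp (-(r * y))) heightMeasure := by
  rw [heightMeasure, integrable_withDensity_iff_integrable_smul' (by fun_prop) (by simp)]
  have h := integrableOn_rpow_mul_exp_neg_mul_rpow (s := s - 1) (by linarith) one_pos hr
  refine h.congr_fun (fun y hy ↦ ?_) measurableSet_Ioi
  simp only [ENNReal.toReal_ofReal (inv_nonneg.mpr (sq_nonneg y)), smul_eq_mul,
    inv_sq_mul_rpow_mul_exp hy, Real.rpow_one, neg_mul]

lemma integral_rpow_mul_exp_neg_heightMeasure (hs : 0 < s) (hr : 0 < r) :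
    ∫ y, y ^ (s + 1) * Real.exp (-(r * y)) ∂heightMeasure = r ^ (-s) * Real.Gamma s := by
  rw [heightMeasure, integral_withDensity_eq_integral_toReal_smul (by fun_prop) (by simp),
    Real.rpow_neg hr.le, ← Real.inv_rpow hr.le, ← one_div,
    ← Real.integral_rpow_mul_exp_neg_mul_Ioi hs hr]
  refine setIntegral_congr_fun measurableSet_Ioi fun y hy ↦ ?_
  simp only [ENNReal.toReal_ofReal (inv_nonneg.mpr (sq_nonneg y)), smul_eq_mul,
    inv_sq_mul_rpow_mul_exp hy]

end HeightIntegral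

section StripMonomial

lemma integral_exp_two_pi_int_mul (l : ℤ) :
    ∫ x in Ioc (0 : ℝ) 1, Complex.exp (2 * π * I * l * x) = if l = 0 then 1 else 0 := by
  rw [← intervalIntegral.integral_of_le zero_le_one]
  split_ifs with hl
  · simp [hl]
  · have hperiod : 2 * π * I * (l : ℂ) * ((1 : ℝ) : ℂ) = l * (2 * π * I) := by push_cast; ring
    rw [integral_exp_mul_complex (by simp [hl, Real.pi_ne_zero]), hperiod,
      Complex.exp_int_mul_two_pi_mul_I]
    simp

variable {s : ℝ}

lemma exp_mul_conj_exp_mul_im_rpow (n m : ℕ) (τ : ℍ) :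
    Complex.exp (2 * π * I * (n + 1) * τ) * conj (Complex.exp (2 * π * I * (m + 1) * τ)) *
        ((τ.im ^ (s + 1) : ℝ) : ℂ) =
      Complex.exp (2 * π * I * ((n - m : ℤ) : ℂ) * τ.re) *
        ((τ.im ^ (s + 1) * Real.exp (-(2 * π * (n + m + 2) * τ.im)) : ℝ) : ℂ) := by
  rw [Complex.ofReal_mul, mul_left_comm, mul_comm (Complex.exp _ * _)]
  congr 1
  rw [← Complex.exp_conj, ← Complex.exp_add, Complex.ofReal_exp, ← Complex.exp_add]
  congr 1
  have hτ : (τ : ℂ) = τ.re + τ.im * I := (Complex.re_add_im (τ : ℂ)).symm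
  rw [hτ]
  simp only [map_mul, map_add, Complex.conj_ofReal, Complex.conj_I, map_natCast, map_one,
    map_ofNat]
  push_cast
  linear_combination (2 * π * (n + m + 2) * τ.im) * Complex.I_sq

lemma norm_exp_mul_conj_exp_mul_im_rpow (n m : ℕ) (τ : ℍ) :
    ‖Complex.exp (2 * π * I * (n + 1) * τ) * conj (Complex.exp (2 * π * I * (m + 1) * τ)) *
        ((τ.im ^ (s + 1) : ℝ) : ℂ)‖ =
      τ.im ^ (s + 1) * Real.exp (-(2 * π * (n + m + 2) * τ.im)) := by
  have hphase : 2 * π * I * ((n - m : ℤ) : ℂ) * τ.re = ((2 * π * (n - m) * τ.re : ℝ) : ℂ) * I := by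
    push_cast
    ring
  have hpos : 0 ≤ τ.im ^ (s + 1) * Real.exp (-(2 * π * (n + m + 2) * τ.im)) :=
    mul_nonneg (Real.rpow_nonneg τ.im_pos.le _) (Real.exp_pos _).le
  rw [exp_mul_conj_exp_mul_im_rpow, norm_mul, hphase, Complex.norm_exp_ofReal_mul_I, one_mul,
    Complex.norm_real, Real.norm_of_nonneg hpos]

lemma integrableOn_strip_exp_mul_conj_exp (hs : 0 < s) (n m : ℕ) :
    IntegrableOn (fun τ : ℍ ↦ Complex.exp (2 * π * I * (n + 1) * τ) *
      conj (Complex.exp (2 * π * I * (m + 1) * τ)) * ((τ.im ^ (s + 1) : ℝ) : ℂ)) strip := by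
  simp_rw [exp_mul_conj_exp_mul_im_rpow]
  exact integrableOn_strip_mul
    (u := fun x ↦ Complex.exp (2 * π * I * ((n - m : ℤ) : ℂ) * x))
    (Continuous.intervalIntegrable (by fun_prop) 0 1).1
    (integrable_rpow_mul_exp_neg_heightMeasure hs (by positivity)).ofReal

lemma setIntegral_strip_exp_mul_conj_exp (hs : 0 < s) (n m : ℕ) :
    ∫ τ : ℍ in strip, Complex.exp (2 * π * I * (n + 1) * τ) *
        conj (Complex.exp (2 * π * I * (m + 1) * τ)) * ((τ.im ^ (s + 1) : ℝ) : ℂ) =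
      if n = m then (((4 * π * (n + 1)) ^ (-s) * Real.Gamma s : ℝ) : ℂ) else 0 := by
  simp_rw [exp_mul_conj_exp_mul_im_rpow]
  rw [setIntegral_strip_mul (fun x ↦ Complex.exp (2 * π * I * ((n - m : ℤ) : ℂ) * x))
    (fun y ↦ ((y ^ (s + 1) * Real.exp (-(2 * π * (n + m + 2) * y)) : ℝ) : ℂ)),
    integral_exp_two_pi_int_mul, integral_complex_ofReal,
    integral_rpow_mul_exp_neg_heightMeasure hs (by positivity)]
  simp only [sub_eq_zero, Nat.cast_inj, ite_mul, one_mul, zero_mul]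
  refine if_ctx_congr Iff.rfl (fun hnm ↦ ?_) fun _ ↦ rfl
  subst hnm
  congr 3
  ring

lemma setIntegral_strip_norm_exp_mul_conj_exp (hs : 0 < s) (n m : ℕ) :
    ∫ τ : ℍ in strip, ‖Complex.exp (2 * π * I * (n + 1) * τ) *
        conj (Complex.exp (2 * π * I * (m + 1) * τ)) * ((τ.im ^ (s + 1) : ℝ) : ℂ)‖ =
      (2 * π * (n + m + 2)) ^ (-s) * Real.Gamma s := by
  have hseparate := setIntegral_strip_mul (fun _ ↦ 1)
    (fun y ↦ y ^ (s + 1) * Real.exp (-(2 * π * (n + m + 2) * y)))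
  rw [integral_rpow_mul_exp_neg_heightMeasure hs (by positivity)] at hseparate
  simp_rw [norm_exp_mul_conj_exp_mul_im_rpow]
  simpa using hseparate

end StripMonomial

section RankinSelberg

lemma summable_norm_mul_norm_mul_add_rpow_neg {E E' : Type*} [SeminormedAddCommGroup E]
    [SeminormedAddCommGroup E'] {a : ℕ → E} {b : ℕ → E'} {p q : ℝ} (hp : 0 ≤ p) (hq : 0 ≤ q)
    (ha : Summable fun n : ℕ ↦ ‖a n‖ * ((n : ℝ) + 1) ^ (-p))
    (hb : Summable fun n : ℕ ↦ ‖b n‖ * ((n : ℝ) + 1) ^ (-q)) :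
    Summable fun i : ℕ × ℕ ↦ ‖a i.1‖ * ‖b i.2‖ * ((i.1 : ℝ) + i.2 + 2) ^ (-(p + q)) := by
  refine (ha.mul_of_nonneg hb (fun n ↦ by positivity) fun n ↦ by positivity).of_nonneg_of_le
    (fun i ↦ by positivity) fun ⟨n, m⟩ ↦ ?_
  have hn : ((n : ℝ) + m + 2) ^ (-p) ≤ ((n : ℝ) + 1) ^ (-p) :=
    Real.rpow_le_rpow_of_nonpos (by positivity) (by linarith [m.cast_nonneg (α := ℝ)])
      (neg_nonpos.mpr hp)
  have hm : ((n : ℝ) + m + 2) ^ (-q) ≤ ((m : ℝ) + 1) ^ (-q) :=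
    Real.rpow_le_rpow_of_nonpos (by positivity) (by linarith [n.cast_nonneg (α := ℝ)])
      (neg_nonpos.mpr hq)
  calc ‖a n‖ * ‖b m‖ * ((n : ℝ) + m + 2) ^ (-(p + q))
      = ‖a n‖ * ‖b m‖ * (((n : ℝ) + m + 2) ^ (-p) * ((n : ℝ) + m + 2) ^ (-q)) := by
        rw [neg_add, Real.rpow_add (by positivity)]
    _ ≤ ‖a n‖ * ‖b m‖ * (((n : ℝ) + 1) ^ (-p) * ((m : ℝ) + 1) ^ (-q)) := by gcongr
    _ = ‖a n‖ * ((n : ℝ) + 1) ^ (-p) * (‖b m‖ * ((m : ℝ) + 1) ^ (-q)) := by ring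

/-- The term of index `(n, m)` of the double series obtained by multiplying out the `q`-expansions
in `f(τ) · conj (g(τ)) · (Im τ) ^ (s + 1)`, where `a` and `b` are the coefficient sequences of `f`
and `g`, indexed so that `a n` is the coefficient of `q ^ (n + 1)`. -/
def rankinSelbergTerm (a b : ℕ → ℂ) (s : ℝ) (i : ℕ × ℕ) (τ : ℍ) : ℂ :=
  a i.1 * conj (b i.2) * (Complex.exp (2 * π * I * (i.1 + 1) * τ) *
    conj (Complex.exp (2 * π * I * (i.2 + 1) * τ)) * ((τ.im ^ (s + 1) : ℝ) : ℂ))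

variable {a b : ℕ → ℂ} {f g : ℍ → ℂ} {s : ℝ}

lemma integrableOn_rankinSelbergTerm (hs : 0 < s) (i : ℕ × ℕ) :
    IntegrableOn (rankinSelbergTerm a b s i) strip :=
  (integrableOn_strip_exp_mul_conj_exp hs i.1 i.2).const_mul _

lemma summable_setIntegral_norm_rankinSelbergTerm (hs : 0 < s)
    (hab : Summable fun i : ℕ × ℕ ↦ ‖a i.1‖ * ‖b i.2‖ * ((i.1 : ℝ) + i.2 + 2) ^ (-s)) :
    Summable fun i ↦ ∫ τ in strip, ‖rankinSelbergTerm a b s i τ‖ := by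
  refine (hab.mul_right ((2 * π) ^ (-s) * Real.Gamma s)).congr fun i ↦ ?_
  simp_rw [rankinSelbergTerm, norm_mul (a i.1 * _)]
  rw [integral_const_mul, setIntegral_strip_norm_exp_mul_conj_exp hs, norm_mul, RCLike.norm_conj,
    Real.mul_rpow (x := 2 * π) (by positivity) (by positivity)]
  ring

lemma hasSum_rankinSelbergTerm {τ : ℍ}
    (hf : HasSum (fun n : ℕ ↦ a n * Complex.exp (2 * π * I * (n + 1) * τ)) (f τ))
    (hg : HasSum (fun n : ℕ ↦ b n * Complex.exp (2 * π * I * (n + 1) * τ)) (g τ)) :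
    HasSum (fun i ↦ rankinSelbergTerm a b s i τ)
      (f τ * conj (g τ) * ((τ.im ^ (s + 1) : ℝ) : ℂ)) := by
  have hg' : HasSum (fun m : ℕ ↦ conj (b m * Complex.exp (2 * π * I * (m + 1) * τ)))
      (conj (g τ)) := by
    simpa only [Function.comp_def] using hg.map (starRingEnd ℂ) Complex.continuous_conj
  have hprod := hf.summable.norm.mul_norm hg'.summable.norm
  refine ((hf.mul hg' hprod.of_norm).mul_right ((τ.im ^ (s + 1) : ℝ) : ℂ)).congr_fun fun i ↦ ?_
  rw [rankinSelbergTerm, map_mul]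
  ring

lemma integrableOn_strip_mul_conj_mul_im_rpow (hs : 0 < s)
    (hf : ∀ τ : ℍ, HasSum (fun n : ℕ ↦ a n * Complex.exp (2 * π * I * (n + 1) * τ)) (f τ))
    (hg : ∀ τ : ℍ, HasSum (fun n : ℕ ↦ b n * Complex.exp (2 * π * I * (n + 1) * τ)) (g τ))
    (hab : Summable fun i : ℕ × ℕ ↦ ‖a i.1‖ * ‖b i.2‖ * ((i.1 : ℝ) + i.2 + 2) ^ (-s)) :
    IntegrableOn (fun τ : ℍ ↦ f τ * conj (g τ) * ((τ.im ^ (s + 1) : ℝ) : ℂ)) strip :=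
  integrable_of_hasSum_of_summable_integral_norm (integrableOn_rankinSelbergTerm hs)
    (summable_setIntegral_norm_rankinSelbergTerm hs hab)
    (ae_of_all _ fun τ ↦ hasSum_rankinSelbergTerm (hf τ) (hg τ))

lemma setIntegral_strip_mul_conj_mul_im_rpow (hs : 0 < s)
    (hf : ∀ τ : ℍ, HasSum (fun n : ℕ ↦ a n * Complex.exp (2 * π * I * (n + 1) * τ)) (f τ))
    (hg : ∀ τ : ℍ, HasSum (fun n : ℕ ↦ b n * Complex.exp (2 * π * I * (n + 1) * τ)) (g τ))
    (hab : Summable fun i : ℕ × ℕ ↦ ‖a i.1‖ * ‖b i.2‖ * ((i.1 : ℝ) + i.2 + 2) ^ (-s)) :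
    ∫ τ : ℍ in strip, f τ * conj (g τ) * ((τ.im ^ (s + 1) : ℝ) : ℂ) =
      (((4 * π) ^ (-s) * Real.Gamma s : ℝ) : ℂ) *
        ∑' n : ℕ, a n * conj (b n) * ((((n : ℝ) + 1) ^ (-s) : ℝ) : ℂ) := by
  have hterm (i : ℕ × ℕ) : ∫ τ in strip, rankinSelbergTerm a b s i τ = a i.1 * conj (b i.2) *
      if i.1 = i.2 then (((4 * π * (i.1 + 1)) ^ (-s) * Real.Gamma s : ℝ) : ℂ) else 0 := by
    simp_rw [rankinSelbergTerm]
    rw [integral_const_mul, setIntegral_strip_exp_mul_conj_exp hs]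
  have hdiag : Function.Injective fun n : ℕ ↦ (n, n) := fun _ _ h ↦ congrArg Prod.fst h
  calc ∫ τ : ℍ in strip, f τ * conj (g τ) * ((τ.im ^ (s + 1) : ℝ) : ℂ)
      = ∫ τ in strip, ∑' i, rankinSelbergTerm a b s i τ :=
        integral_congr_ae (ae_of_all _ fun τ ↦
          (hasSum_rankinSelbergTerm (hf τ) (hg τ)).tsum_eq.symm)
    _ = ∑' i, ∫ τ in strip, rankinSelbergTerm a b s i τ :=
        (integral_tsum_of_summable_integral_norm (integrableOn_rankinSelbergTerm hs)
          (summable_setIntegral_norm_rankinSelbergTerm hs hab)).symm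
    _ = ∑' n, ∫ τ in strip, rankinSelbergTerm a b s (n, n) τ := by
        refine (hdiag.tsum_eq fun i hi ↦ ?_).symm
        by_contra hne
        refine hi ?_
        change ∫ τ in strip, rankinSelbergTerm a b s i τ = 0
        rw [hterm, if_neg fun h ↦ hne ⟨i.1, Prod.ext rfl h⟩, mul_zero]
    _ = (((4 * π) ^ (-s) * Real.Gamma s : ℝ) : ℂ) *
          ∑' n : ℕ, a n * conj (b n) * ((((n : ℝ) + 1) ^ (-s) : ℝ) : ℂ) := by
        rw [← tsum_mul_left]
        refine tsum_congr fun n ↦ ?_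
        rw [hterm, if_pos rfl, Real.mul_rpow (x := 4 * π) (by positivity) (by positivity)]
        push_cast
        ring

end RankinSelberg

section CuspForm

/-- The Mathlib cusp form underlying a cusp form in the sense of `IsCuspFormGamma0`, through which
Mathlib's Hecke bound on Fourier coefficients becomes available. -/
def IsCuspFormGamma0.toCuspForm {N w : ℕ} [NeZero N] {f : ℂ → ℂ} {a : ℕ → ℂ}
    (hf : IsCuspFormGamma0 N w f a) :
    CuspForm ((CongruenceSubgroup.Gamma0 N).map (Matrix.SpecialLinearGroup.mapGL ℝ)) w where
  toFun τ := f τ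
  slash_action_eq' := by
    rintro _ ⟨γ, hγ, rfl⟩
    ext τ
    refine (ModularForm.SL_slash_apply (k := w) (fun τ : ℍ ↦ f τ) γ τ).trans ?_
    rw [← moeb_coe, hf.2.1 γ hγ τ (coe_mem_UHP τ)]
    have hj := automorphyFactor_ne_zero γ τ
    simp [UpperHalfPlane.denom]
    field_simp
  holo' := by
    rw [UpperHalfPlane.mdifferentiable_iff]
    refine hf.1.congr fun z (hz : 0 < z.im) ↦ ?_
    simp [UpperHalfPlane.ofComplex_apply_of_im_pos hz]
  zero_at_cusps' := by
    intro c hc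
    rw [Subgroup.IsArithmetic.isCusp_iff_isCusp_SL2Z, isCusp_SL2Z_iff'] at hc
    obtain ⟨γ, rfl⟩ := hc
    rw [OnePoint.isZeroAt_iff rfl]
    refine ((hf.2.2.1 γ).comp UpperHalfPlane.tendsto_coe_atImInfty).congr fun τ ↦ ?_
    refine Eq.trans ?_ (ModularForm.SL_slash_apply (k := w) (fun τ : ℍ ↦ f τ) γ τ).symm
    simp [UpperHalfPlane.denom, moeb_coe, mul_comm]

lemma qParam_one_pow (z : ℂ) (n : ℕ) :
    Function.Periodic.qParam 1 z ^ n = Complex.exp (2 * π * I * n * z) := by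
  rw [Function.Periodic.qParam, ← Complex.exp_nat_mul]
  congr 1
  push_cast
  ring

namespace IsCuspFormGamma0

variable {N w : ℕ} {f : ℂ → ℂ} {a : ℕ → ℂ}

lemma hasSum_qExpansion (hf : IsCuspFormGamma0 N w f a) (τ : ℍ) :
    HasSum (fun n : ℕ ↦ a (n + 1) * Complex.exp (2 * π * I * (n + 1) * τ)) (f τ) :=
  hf.2.2.2.1 τ (coe_mem_UHP τ)

lemma coeff_qExpansion_toCuspForm [NeZero N] (hf : IsCuspFormGamma0 N w f a) (n : ℕ) :
    (UpperHalfPlane.qExpansion 1 hf.toCuspForm).coeff (n + 1) = a (n + 1) := by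
  let c : ℕ → ℂ := fun n ↦ if n = 0 then 0 else a n
  have hc (τ : ℍ) : HasSum (fun m ↦ c m • Function.Periodic.qParam 1 τ ^ m) (f τ) := by
    refine (hasSum_nat_add_iff' 1).mp ?_
    simpa [c, qParam_one_pow] using hf.hasSum_qExpansion τ
  exact (ModularFormClass.qExpansion_coeff_unique (f := hf.toCuspForm) one_pos (by simp) hc
    (n + 1)).symm

lemma isBigO_coeff [NeZero N] (hf : IsCuspFormGamma0 N w f a) :
    a =O[atTop] fun n ↦ (n : ℝ) ^ ((w : ℝ) / 2) := by
  have hO := CuspFormClass.qExpansion_isBigO hf.toCuspForm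
  rw [CongruenceSubgroup.strictWidthInfty_Gamma0, Int.cast_natCast] at hO
  refine hO.congr' ?_ .rfl
  filter_upwards [eventually_ge_atTop 1] with n hn
  obtain ⟨m, rfl⟩ := Nat.exists_eq_add_of_le' hn
  exact hf.coeff_qExpansion_toCuspForm m

lemma summable_norm_coeff_mul_rpow_neg [NeZero N] (hf : IsCuspFormGamma0 N w f a) {p : ℝ}
    (hp : (w : ℝ) / 2 + 1 < p) : Summable fun n : ℕ ↦ ‖a (n + 1)‖ * ((n : ℝ) + 1) ^ (-p) := by
  have hmajorant : Summable fun n : ℕ ↦ (n : ℝ) ^ ((w : ℝ) / 2 - p) :=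
    Real.summable_nat_rpow.mpr (by linarith)
  have hO : (fun n : ℕ ↦ ‖a n‖ * (n : ℝ) ^ (-p)) =O[atTop] fun n ↦ (n : ℝ) ^ ((w : ℝ) / 2 - p) := by
    refine (hf.isBigO_coeff.norm_left.mul (Asymptotics.isBigO_refl _ atTop)).congr' .rfl ?_
    filter_upwards [eventually_gt_atTop 0] with n hn
    rw [sub_eq_add_neg, Real.rpow_add (by exact_mod_cast hn)]
  simpa using (summable_nat_add_iff 1).mpr (summable_of_isBigO_nat hmajorant hO)

end IsCuspFormGamma0

end CuspForm

section RankinSelbergUnfolding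

variable {N : ℕ}

lemma IsFundamentalDomainGamma0.setIntegral_E8N_mul {F : Set ℂ}
    (hF : IsFundamentalDomainGamma0 N F) {h : ℍ → ℂ}
    (hinv : ∀ (γ : CongruenceSubgroup.Gamma0 N) (τ : ℍ),
      h (γ • τ) = jsqN N τ (Quotient.mk _ γ) ^ (-4 : ℤ) * h τ)
    (h_int : IntegrableOn h strip) :
    ∫ τ in UpperHalfPlane.coe ⁻¹' F, E8N N τ * h τ = ∫ τ in strip, h τ := by
  have hF_meas : MeasurableSet (UpperHalfPlane.coe ⁻¹' F) := UpperHalfPlane.measurable_coe hF.1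
  have hcount := hF.ae_encard_eq_two
  have h_indicator : Integrable (strip.indicator h) :=
    (integrable_indicator_iff measurableSet_strip).mpr h_int
  have horbit : ∀ᵐ τ : ℍ ∂volume.restrict (UpperHalfPlane.coe ⁻¹' F),
      ∑' γ : CongruenceSubgroup.Gamma0 N, strip.indicator h (γ • τ) = 2 * (E8N N τ * h τ) :=
    (ae_summable_comp_smul (m := 2) hF_meas hcount h_indicator).mono fun τ hτ ↦
      tsum_indicator_strip_smul (hinv · τ) hτ
  refine mul_left_cancel₀ (two_ne_zero (α := ℂ)) ?_
  calc 2 * ∫ τ in UpperHalfPlane.coe ⁻¹' F, E8N N τ * h τ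
      = ∫ τ in UpperHalfPlane.coe ⁻¹' F, 2 * (E8N N τ * h τ) := (integral_const_mul 2 _).symm
    _ = ∫ τ in UpperHalfPlane.coe ⁻¹' F,
          ∑' γ : CongruenceSubgroup.Gamma0 N, strip.indicator h (γ • τ) :=
        (integral_congr_ae horbit).symm
    _ = 2 • ∫ τ, strip.indicator h τ := setIntegral_tsum_comp_smul hF_meas hcount h_indicator
    _ = 2 * ∫ τ in strip, h τ := by
        rw [integral_indicator measurableSet_strip, nsmul_eq_mul, Nat.cast_ofNat]

namespace IsCuspFormGamma0

variable {v w : ℕ} {f g : ℂ → ℂ} {a b : ℕ → ℂ}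

lemma mul_conj_mul_im_pow_smul (hf : IsCuspFormGamma0 N v f a)
    (hg : IsCuspFormGamma0 N (v + 8) g b) (γ : CongruenceSubgroup.Gamma0 N) (τ : ℍ) :
    f (γ • τ : ℍ) * conj (g (γ • τ : ℍ)) * ((γ • τ).im : ℂ) ^ (v + 8) =
      jsqN N τ (Quotient.mk _ γ) ^ (-4 : ℤ) * (f τ * conj (g τ) * (τ.im : ℂ) ^ (v + 8)) := by
  have hj := automorphyFactor_ne_zero γ.1 τ
  have hfγ := hf.2.1 γ.1 γ.2 τ (coe_mem_UHP τ)
  have hgγ := hg.2.1 γ.1 γ.2 τ (coe_mem_UHP τ)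
  rw [moeb_coe] at hfγ hgγ
  have him : ((γ.1 • τ).im : ℂ) = τ.im /
      ((((γ.1.1 1 0 : ℤ) : ℂ) * τ + ((γ.1.1 1 1 : ℤ) : ℂ)) *
        conj (((γ.1.1 1 0 : ℤ) : ℂ) * τ + ((γ.1.1 1 1 : ℤ) : ℂ))) := by
    rw [Complex.mul_conj, ModularGroup.im_smul_eq_div_normSq, ModularGroup.denom_apply]
    push_cast
    rfl
  change f (γ.1 • τ : ℍ) * conj (g (γ.1 • τ : ℍ)) * ((γ.1 • τ).im : ℂ) ^ (v + 8) =
    ((((γ.1.1 1 0 : ℤ) : ℂ) * τ + ((γ.1.1 1 1 : ℤ) : ℂ)) ^ 2) ^ (-4 : ℤ) * _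
  rw [hfγ, hgγ, him]
  generalize ((γ.1.1 1 0 : ℤ) : ℂ) * (τ : ℂ) + ((γ.1.1 1 1 : ℤ) : ℂ) = j at hj
  have hj' : conj j ≠ 0 := (map_ne_zero _).mpr hj
  rw [map_mul, map_pow, div_pow, mul_pow, zpow_neg, zpow_ofNat]
  field_simp
  ring

variable [NeZero N]

lemma summable_norm_mul_norm_mul_rpow_neg (hf : IsCuspFormGamma0 N v f a)
    (hg : IsCuspFormGamma0 N w g b) {s : ℝ} (hs : ((v : ℝ) + w) / 2 + 2 < s) :
    Summable fun i : ℕ × ℕ ↦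
      ‖a (i.1 + 1)‖ * ‖b (i.2 + 1)‖ * ((i.1 : ℝ) + i.2 + 2) ^ (-s) := by
  obtain ⟨p, hp, hps⟩ := exists_between (show (v : ℝ) / 2 + 1 < s - (w / 2 + 1) by linarith)
  have h := summable_norm_mul_norm_mul_add_rpow_neg (by linarith [v.cast_nonneg (α := ℝ)])
    (by linarith [w.cast_nonneg (α := ℝ)])
    (hf.summable_norm_coeff_mul_rpow_neg hp)
    (hg.summable_norm_coeff_mul_rpow_neg (p := s - p) (by linarith))
  simpa only [add_sub_cancel] using h

lemma integrableOn_strip_mul_conj_mul_im_pow (hf : IsCuspFormGamma0 N v f a)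
    (hg : IsCuspFormGamma0 N w g b) {l : ℕ} (hl : ((v : ℝ) + w) / 2 + 2 < l) :
    IntegrableOn (fun τ : ℍ ↦ f τ * conj (g τ) * (τ.im : ℂ) ^ (l + 1)) strip := by
  have hl₀ : (0 : ℝ) < l := by linarith [v.cast_nonneg (α := ℝ), w.cast_nonneg (α := ℝ)]
  have h := integrableOn_strip_mul_conj_mul_im_rpow hl₀ hf.hasSum_qExpansion hg.hasSum_qExpansion
    (hf.summable_norm_mul_norm_mul_rpow_neg hg hl)
  simpa only [← Nat.cast_add_one, Real.rpow_natCast, Complex.ofReal_pow] using h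

lemma setIntegral_strip_mul_conj_mul_im_pow (hf : IsCuspFormGamma0 N v f a)
    (hg : IsCuspFormGamma0 N w g b) {l : ℕ} (hl : ((v : ℝ) + w) / 2 + 2 < l) :
    ∫ τ : ℍ in strip, f τ * conj (g τ) * (τ.im : ℂ) ^ (l + 1) =
      ((4 * (π : ℂ)) ^ l)⁻¹ * (Real.Gamma l : ℂ) *
        ∑' n : ℕ, a (n + 1) * conj (b (n + 1)) / ((n : ℂ) + 1) ^ l := by
  have hl₀ : (0 : ℝ) < l := by linarith [v.cast_nonneg (α := ℝ), w.cast_nonneg (α := ℝ)]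
  have hneg {x : ℝ} (hx : 0 ≤ x) : x ^ (-(l : ℝ)) = (x ^ l)⁻¹ := by
    rw [Real.rpow_neg hx, Real.rpow_natCast]
  have h := setIntegral_strip_mul_conj_mul_im_rpow hl₀ hf.hasSum_qExpansion hg.hasSum_qExpansion
    (hf.summable_norm_mul_norm_mul_rpow_neg hg hl)
  simp_rw [← Nat.cast_add_one, Real.rpow_natCast, hneg (Nat.cast_nonneg _)] at h
  rw [hneg (by positivity)] at h
  simpa [div_eq_mul_inv] using h

end IsCuspFormGamma0

end RankinSelbergUnfolding

/-- Unfolding for `Γ₀(N)`: if `f`, `g` are cusp forms of weights `2k`, `2k+8` for `Γ₀(N)`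
with Fourier coefficients `a`, `b`, and `F` is a measurable fundamental domain for `Γ₀(N)`,
then `∫_F f(τ) conj(g(τ)) E₈^{(N)}(τ) (Im τ)^{2k+8} d*τ
  = (4π)^{-(2k+7)} Γ(2k+7) ∑_{n≥1} a(n) conj(b(n)) n^{-(2k+7)}`. -/
theorem petersson_with_E8N_eq_dirichlet_series (N k : ℕ) (hN : 1 ≤ N) (hk : 1 ≤ k)
    (f g : ℂ → ℂ) (a b : ℕ → ℂ)
    (hf : IsCuspFormGamma0 N (2 * k) f a) (hg : IsCuspFormGamma0 N (2 * k + 8) g b)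
    (F : Set ℂ) (hF : IsFundamentalDomainGamma0 N F) :
    ∫ τ in F, f τ * conj (g τ) * E8N N τ * (τ.im : ℂ) ^ (2 * k + 8) ∂hypMeasure
      = ((4 * (π : ℂ)) ^ (2 * k + 7))⁻¹ * (Real.Gamma (2 * k + 7) : ℂ) *
          ∑' n : ℕ, a (n + 1) * conj (b (n + 1)) / ((n : ℂ) + 1) ^ (2 * k + 7) := by
  have : NeZero N := ⟨by omega⟩
  have hweight : (((2 * k : ℕ) : ℝ) + (2 * k + 8 : ℕ)) / 2 + 2 < (2 * k + 7 : ℕ) := by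
    push_cast
    linarith
  calc ∫ τ in F, f τ * conj (g τ) * E8N N τ * (τ.im : ℂ) ^ (2 * k + 8) ∂hypMeasure
      = ∫ τ : ℍ in UpperHalfPlane.coe ⁻¹' F,
          E8N N τ * (f τ * conj (g τ) * (τ.im : ℂ) ^ (2 * k + 8)) := by
        rw [setIntegral_hypMeasure hF.1 hF.2.1]
        simp only [UpperHalfPlane.coe_im]
        congr 1 with τ
        ring
    _ = ∫ τ : ℍ in strip, f τ * conj (g τ) * (τ.im : ℂ) ^ (2 * k + 8) :=
        hF.setIntegral_E8N_mul (hf.mul_conj_mul_im_pow_smul hg)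
          (hf.integrableOn_strip_mul_conj_mul_im_pow hg hweight)
    _ = _ := by
        simpa using hf.setIntegral_strip_mul_conj_mul_im_pow hg hweight

end
end

section
/- Let m be a positive integer divisible by 8 and let S be a positive definite even unimodular m×m matrix. Then the theta series θ_S is a modular form of weight m/2 for SL₂(ℤ): θ_S is holomorphic on ℍ, θ_S((aτ+b)/(cτ+d)) = (cτ+d)^{m/2}·θ_S(τ) for all (a b; c d) ∈ SL₂(ℤ), and θ_S(τ) is bounded as Im τ → ∞. -/
open Complex Real Set
open scoped MatrixGroups Matrix

noncomputable section

/-- `S ∈ M_m(ℤ)` is positive definite even unimodular: symmetric, positive definite (as a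
real matrix), of determinant one, with all diagonal entries even. -/
def IsPosDefEvenUnimodular {m : ℕ} (S : Matrix (Fin m) (Fin m) ℤ) : Prop :=
  S.IsSymm ∧ (S.map ((↑) : ℤ → ℝ)).PosDef ∧ S.det = 1 ∧ ∀ i, Even (S i i)

/-- The theta series `θ_S(τ) = ∑_{x ∈ ℤ^m} e^{πiτ xᵀSx}` of an integral matrix `S`. -/
def thetaSeries {m : ℕ} (S : Matrix (Fin m) (Fin m) ℤ) (τ : ℂ) : ℂ :=
  ∑' x : Fin m → ℤ, Complex.exp (π * I * τ * ((x ⬝ᵥ S.mulVec x : ℤ) : ℂ))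

/-!
Poisson summation over `ℤ^m` for the Gaussian `e^{πiτ xᵀAx}` relates the theta series of a real
positive definite matrix `A` at `τ` to that of `A⁻¹` at `-1/τ`. If `S` is integral and unimodular,
then `S = Sᵀ S⁻¹ S` and `x ↦ Sx` permutes `ℤ^m`, so `S⁻¹` and `S` have the same theta series and
`θ_S` has weight `m/2` under `τ ↦ -1/τ`; the factor `i^{m/2}` is trivial because `8 ∣ m`. Evenness
of `xᵀSx` gives invariance under `τ ↦ τ + 1`, and these two maps generate the modular group.
-/

open MeasureTheory Filter Topology TopologicalSpace Asymptotics
open scoped FourierTransform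

section Lattice

variable {ι : Type*}

/-- The integral vector `n` as a point of Euclidean space: `intVec` embeds the lattice `ℤ^ι`. -/
def intVec : (ι → ℤ) →+ EuclideanSpace ℝ ι where
  toFun n := WithLp.toLp 2 fun i => (n i : ℝ)
  map_zero' := by ext; simp
  map_add' m n := by ext; simp

@[simp]
lemma intVec_apply (n : ι → ℤ) (i : ι) : intVec n i = n i := rfl

lemma intVec_injective : Function.Injective (intVec (ι := ι)) := by
  intro m n h
  ext i
  simpa using congrArg (fun x : EuclideanSpace ℝ ι => x i) h

lemma tendsto_intVec_cofinite [Finite ι] : Tendsto (intVec (ι := ι)) cofinite (cocompact _) := by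
  have hcast : IsClosedEmbedding fun (n : ι → ℤ) i => (n i : ℝ) :=
    .piMap fun _ => Int.isClosedEmbedding_coe_real
  have hclosed : IsClosedEmbedding (intVec (ι := ι)) :=
    (EuclideanSpace.equiv ι ℝ).symm.toHomeomorph.isClosedEmbedding.comp hcast
  simpa only [cocompact_eq_cofinite] using hclosed.tendsto_cocompact

variable [Fintype ι]

lemma intVec_mem_span (n : ι → ℤ) :
    intVec n ∈ Submodule.span ℤ (range (EuclideanSpace.basisFun ι ℝ).toBasis) := by
  classical
  rw [Module.Basis.mem_span_iff_repr_mem]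
  intro i
  exact ⟨n i, by simp⟩

lemma ofLp_intVec_mulVec {κ : Type*} (U : Matrix κ ι ℤ) (n : ι → ℤ) :
    (intVec (U *ᵥ n)).ofLp = U.map (Int.cast : ℤ → ℝ) *ᵥ (intVec n).ofLp :=
  funext fun i => RingHom.map_mulVec (Int.castRingHom ℝ) U n i

lemma summable_norm_intVec_rpow {r : ℝ} (hr : r < -Fintype.card ι) :
    Summable fun n : ι → ℤ => ‖intVec n‖ ^ r := by
  set b := (EuclideanSpace.basisFun ι ℝ).toBasis
  have hrank : Module.finrank ℤ (Submodule.span ℤ (range b)) = Fintype.card ι :=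
    Module.finrank_eq_card_basis (b.restrictScalars ℤ)
  have hsum : Summable fun x : Submodule.span ℤ (range b) => ‖x‖ ^ r :=
    ZLattice.summable_norm_rpow _ r (by rwa [hrank])
  have hinj : Function.Injective fun n : ι → ℤ =>
      (⟨intVec n, intVec_mem_span n⟩ : Submodule.span ℤ (range b)) :=
    fun m n h => intVec_injective (congrArg Subtype.val h)
  simpa only [Function.comp_def, Submodule.coe_norm] using hsum.comp_injective hinj

end Lattice

section Unfolding

/-- The half-open unit cube `(0, 1]^ι`, a fundamental domain for the lattice `ℤ^ι`. -/
def unitCube (ι : Type*) : Set (EuclideanSpace ℝ ι) := {x | ∀ i, x i ∈ Ioc (0 : ℝ) 1}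

variable {ι : Type*}

lemma existsUnique_sub_intVec_mem_unitCube (x : EuclideanSpace ℝ ι) :
    ∃! n : ι → ℤ, x - intVec n ∈ unitCube ι := by
  choose n hn huniq using fun i => existsUnique_sub_zsmul_mem_Ioc one_pos (x i) 0
  refine ⟨n, fun i => by simpa using hn i, fun k hk => funext fun i => huniq i _ ?_⟩
  simpa using hk i

lemma iUnion_preimage_sub_intVec_unitCube :
    ⋃ n : ι → ℤ, (· - intVec n) ⁻¹' unitCube ι = univ :=
  eq_univ_of_forall fun x => mem_iUnion.2 (existsUnique_sub_intVec_mem_unitCube x).exists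

lemma pairwise_disjoint_preimage_sub_intVec_unitCube :
    Pairwise (Function.onFun Disjoint fun n : ι → ℤ => (· - intVec n) ⁻¹' unitCube ι) :=
  fun _ _ hne => Set.disjoint_left.2 fun x h h' =>
    hne ((existsUnique_sub_intVec_mem_unitCube x).unique h h')

lemma measurableSet_unitCube [Finite ι] : MeasurableSet (unitCube ι) := by
  have : unitCube ι = ⋂ i, (fun x : EuclideanSpace ℝ ι => x i) ⁻¹' Ioc 0 1 := by
    ext; simp [unitCube]
  rw [this]
  exact .iInter fun i => measurableSet_Ioc.preimage (by fun_prop)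

lemma isBounded_unitCube [Finite ι] : Bornology.IsBounded (unitCube ι) := by
  cases nonempty_fintype ι
  refine (isBounded_iff_forall_norm_le).2 ⟨√(Fintype.card ι), fun x hx => ?_⟩
  rw [EuclideanSpace.norm_eq]
  refine Real.sqrt_le_sqrt ((Finset.sum_le_card_nsmul _ _ 1 fun i _ => ?_).trans (by simp))
  rw [Real.norm_eq_abs, abs_of_pos (hx i).1]
  exact pow_le_one₀ (hx i).1.le (hx i).2

lemma setIntegral_preimage_sub_right {E F : Type*} [AddGroup E] [MeasurableSpace E]
    [MeasurableAdd E] {μ : Measure E} [μ.IsAddRightInvariant] [NormedAddCommGroup F]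
    [NormedSpace ℝ F] (f : E → F) (s : Set E) (v : E) :
    ∫ x in (· - v) ⁻¹' s, f x ∂μ = ∫ x in s, f (x + v) ∂μ := by
  rw [← (measurePreserving_add_right μ v).setIntegral_preimage_emb
    (measurableEmbedding_addRight v) f]
  simp [preimage_preimage]

variable [Fintype ι]

lemma integrableOn_unitCube {F : Type*} [NormedAddCommGroup F] {f : EuclideanSpace ℝ ι → F}
    (hf : Continuous f) : IntegrableOn f (unitCube ι) :=
  (hf.continuousOn.integrableOn_compact isBounded_unitCube.isCompact_closure).mono_set
    subset_closure

/-- The translates of `f` by the lattice `ℤ^ι` are normally summable on compact sets, so that the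
periodization `∑ₙ f (x + n)` is a continuous function of `x`. -/
def LatticeSummable {F : Type*} [NormedAddCommGroup F] (f : C(EuclideanSpace ℝ ι, F)) : Prop :=
  ∀ K : Compacts (EuclideanSpace ℝ ι),
    Summable fun n : ι → ℤ => ‖(f.comp (.addRight (intVec n))).restrict K‖

namespace LatticeSummable

variable {F : Type*} [NormedAddCommGroup F] {f : C(EuclideanSpace ℝ ι, F)}

lemma summable_setIntegral_norm (hf : LatticeSummable f) :
    Summable fun n : ι → ℤ => ∫ x in unitCube ι, ‖f (x + intVec n)‖ := by
  let K : Compacts (EuclideanSpace ℝ ι) := ⟨_, isBounded_unitCube.isCompact_closure⟩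
  refine ((hf K).mul_right (volume.real (unitCube ι))).of_nonneg_of_le
    (fun n => integral_nonneg fun _ => norm_nonneg _) fun n => ?_
  refine (Real.le_norm_self _).trans
    (norm_setIntegral_le_of_norm_le_const isBounded_unitCube.measure_lt_top fun x hx => ?_)
  rw [norm_norm]
  exact ((f.comp (.addRight (intVec n))).restrict K).norm_coe_le_norm ⟨x, subset_closure hx⟩

lemma integrable (hf : LatticeSummable f) : Integrable f := by
  rw [← integrableOn_univ, ← iUnion_preimage_sub_intVec_unitCube]
  refine integrableOn_iUnion_of_summable_integral_norm (fun n => ?_) ?_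
  · have htile : IntegrableOn (fun x => f (x + intVec n)) (unitCube ι) :=
      integrableOn_unitCube (by fun_prop)
    rw [← (measurePreserving_add_right volume (intVec n)).integrableOn_comp_preimage
      (measurableEmbedding_addRight _)]
    simpa [preimage_preimage, Function.comp_def] using htile
  · simpa only [setIntegral_preimage_sub_right (fun x => ‖f x‖)] using hf.summable_setIntegral_norm

lemma integral_eq_setIntegral_tsum [NormedSpace ℝ F] (hf : LatticeSummable f) :
    ∫ x, f x = ∫ x in unitCube ι, ∑' n : ι → ℤ, f (x + intVec n) := by
  have htiles := hasSum_integral_iUnion (f := f)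
    (fun n : ι → ℤ => measurableSet_unitCube.preimage (by fun_prop))
    pairwise_disjoint_preimage_sub_intVec_unitCube hf.integrable.integrableOn
  have hcube := hasSum_integral_of_summable_integral_norm
    (fun n => integrableOn_unitCube (by fun_prop)) hf.summable_setIntegral_norm
  simp only [iUnion_preimage_sub_intVec_unitCube, setIntegral_univ,
    setIntegral_preimage_sub_right f] at htiles
  exact htiles.unique hcube

end LatticeSummable

end Unfolding

section Torus

variable {ι : Type*}

/-- The projection of Euclidean space onto the torus `(ℝ / ℤ)^ι`. -/
def toTorus : C(EuclideanSpace ℝ ι, UnitAddTorus ι) where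
  toFun x i := (x i : UnitAddCircle)
  continuous_toFun :=
    continuous_pi fun _ => (AddCircle.continuous_mk' 1).comp (PiLp.continuous_apply 2 _ _)

lemma toTorus_apply (x : EuclideanSpace ℝ ι) (i : ι) : toTorus x i = (x i : UnitAddCircle) := rfl

lemma isQuotientMap_toTorus : IsQuotientMap (toTorus (ι := ι)) :=
  (IsOpenQuotientMap.piMap fun _ => QuotientAddGroup.isOpenQuotientMap_mk).isQuotientMap.comp
    (PiLp.homeomorph 2 fun _ : ι => ℝ).isQuotientMap

lemma toTorus_eq_toTorus_iff {x y : EuclideanSpace ℝ ι} :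
    toTorus x = toTorus y ↔ ∃ n : ι → ℤ, y = x + intVec n := by
  have hcoord (i : ι) : toTorus x i = toTorus y i ↔ ∃ k : ℤ, y i = x i + k := by
    rw [eq_comm, toTorus_apply, toTorus_apply, QuotientAddGroup.eq_iff_sub_mem,
      AddSubgroup.mem_zmultiples_iff]
    simp [eq_sub_iff_add_eq', eq_comm]
  simp only [funext_iff, hcoord, Classical.skolem, PiLp.ext_iff, PiLp.add_apply, intVec_apply]

@[simp]
lemma toTorus_add_intVec (x : EuclideanSpace ℝ ι) (n : ι → ℤ) :
    toTorus (x + intVec n) = toTorus x :=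
  (toTorus_eq_toTorus_iff.2 ⟨n, rfl⟩).symm

variable [Fintype ι]

lemma mFourier_neg_toTorus (n : ι → ℤ) (x : EuclideanSpace ℝ ι) :
    UnitAddTorus.mFourier (-n) (toTorus x) = 𝐞 (-inner ℝ x (intVec n)) := by
  simp only [UnitAddTorus.mFourier, ContinuousMap.coe_mk, toTorus_apply, fourier_coe_apply,
    Real.fourierChar_apply, ← Complex.exp_sum, PiLp.inner_apply]
  congr 1
  push_cast [Finset.sum_mul, Finset.mul_sum, ← Finset.sum_neg_distrib]
  exact Finset.sum_congr rfl fun i _ => by simp; ring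

lemma mFourierCoeff_eq_setIntegral_unitCube {F : Type*} [NormedAddCommGroup F] [NormedSpace ℂ F]
    (G : UnitAddTorus ι → F) (n : ι → ℤ) :
    UnitAddTorus.mFourierCoeff G n =
      ∫ x in unitCube ι, UnitAddTorus.mFourier (-n) (toTorus x) • G (toTorus x) := by
  rw [UnitAddTorus.mFourierCoeff_eq_integral G n 0,
    ← (PiLp.volume_preserving_toLp ι).setIntegral_preimage_emb
      (MeasurableEquiv.toLp 2 (ι → ℝ)).measurableEmbedding]
  simp [unitCube, toTorus]

namespace LatticeSummable

lemma exists_periodization {F : Type*} [NormedAddCommGroup F] [CompleteSpace F]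
    {f : C(EuclideanSpace ℝ ι, F)} (hf : LatticeSummable f) :
    ∃ G : C(UnitAddTorus ι, F),
      ∀ x, HasSum (fun n : ι → ℤ => f (x + intVec n)) (G (toTorus x)) := by
  have hsum := ContinuousMap.summable_of_locally_summable_norm hf
  set P := ∑' n : ι → ℤ, f.comp (.addRight (intVec n))
  have hP (x) : HasSum (fun n : ι → ℤ => f (x + intVec n)) (P x) :=
    ContinuousMap.hasSum_apply hsum.hasSum x
  have hperiodic : Function.FactorsThrough P toTorus := by
    intro x y hxy
    obtain ⟨k, rfl⟩ := toTorus_eq_toTorus_iff.1 hxy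
    refine (hP x).unique ((Equiv.addLeft k).hasSum_iff.1 ?_)
    simpa [Function.comp_def, add_assoc] using hP (x + intVec k)
  refine ⟨isQuotientMap_toTorus.lift P hperiodic, fun x => ?_⟩
  have hlift := DFunLike.congr_fun (isQuotientMap_toTorus.lift_comp P hperiodic) x
  rw [ContinuousMap.comp_apply] at hlift
  exact hlift ▸ hP x

variable {f : C(EuclideanSpace ℝ ι, ℂ)}

lemma mFourier_neg_mul (hf : LatticeSummable f) (n : ι → ℤ) :
    LatticeSummable ((UnitAddTorus.mFourier (-n)).comp toTorus * f) := by
  refine fun K => (hf K).of_nonneg_of_le (fun _ => norm_nonneg _) fun k => ?_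
  refine (ContinuousMap.norm_le _ (norm_nonneg _)).2 fun x => ?_
  simp only [ContinuousMap.restrict_apply, ContinuousMap.comp_apply, ContinuousMap.mul_apply,
    mFourier_neg_toTorus, norm_mul, Circle.norm_coe, one_mul]
  exact ((f.comp (.addRight (intVec k))).restrict K).norm_coe_le_norm x

lemma mFourierCoeff_periodization (hf : LatticeSummable f) {G : UnitAddTorus ι → ℂ}
    (hG : ∀ x, HasSum (fun n : ι → ℤ => f (x + intVec n)) (G (toTorus x))) (n : ι → ℤ) :
    UnitAddTorus.mFourierCoeff G n = 𝓕 (f : EuclideanSpace ℝ ι → ℂ) (intVec n) := by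
  calc UnitAddTorus.mFourierCoeff G n
      = ∫ x in unitCube ι, ∑' k : ι → ℤ,
          ((UnitAddTorus.mFourier (-n)).comp toTorus * f) (x + intVec k) := by
        simp_rw [mFourierCoeff_eq_setIntegral_unitCube, ContinuousMap.mul_apply,
          ContinuousMap.comp_apply, toTorus_add_intVec, tsum_mul_left, (hG _).tsum_eq, smul_eq_mul]
    _ = ∫ x, UnitAddTorus.mFourier (-n) (toTorus x) * f x :=
        (hf.mFourier_neg_mul n).integral_eq_setIntegral_tsum.symm
    _ = 𝓕 (f : EuclideanSpace ℝ ι → ℂ) (intVec n) := by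
        simp_rw [Real.fourier_eq, mFourier_neg_toTorus, Circle.smul_def, smul_eq_mul]

theorem tsum_eq_tsum_fourier (hf : LatticeSummable f)
    (hsum : Summable fun n : ι → ℤ => 𝓕 (f : EuclideanSpace ℝ ι → ℂ) (intVec n))
    (x : EuclideanSpace ℝ ι) :
    ∑' n : ι → ℤ, f (x + intVec n) =
      ∑' n : ι → ℤ, 𝓕 (f : EuclideanSpace ℝ ι → ℂ) (intVec n) *
        UnitAddTorus.mFourier n (toTorus x) := by
  obtain ⟨G, hG⟩ := hf.exists_periodization
  simp only [← hf.mFourierCoeff_periodization hG] at hsum ⊢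
  rw [(hG x).tsum_eq]
  exact (UnitAddTorus.hasSum_mFourier_series_apply_of_summable hsum _).tsum_eq.symm

end LatticeSummable

end Torus

section Decay

lemma isBigO_norm_restrict_comp_addRight {E F : Type*} [NormedAddCommGroup E] [ProperSpace E]
    [NormedAddCommGroup F] {f : C(E, F)} {b : ℝ} (hb : 0 < b)
    (hf : f =O[cocompact E] fun x => ‖x‖ ^ (-b)) (K : Compacts E) :
    (fun x => ‖(f.comp (.addRight x)).restrict K‖) =O[cocompact E] fun x => ‖x‖ ^ (-b) := by
  obtain ⟨R, hR⟩ := K.isCompact.isBounded.exists_norm_le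
  obtain ⟨c, hc, hfc⟩ := hf.exists_pos
  rw [← Metric.cobounded_eq_cocompact] at hfc ⊢
  obtain ⟨r, -, hr⟩ := hasBasis_cobounded_norm.eventually_iff.1 hfc.bound
  refine .of_bound (c * (1 / 2) ^ (-b)) (hasBasis_cobounded_norm.eventually_iff.2
    ⟨max 1 (max (2 * R) (2 * r)), trivial, fun x hx => ?_⟩)
  obtain ⟨hx1, hxR, hxr⟩ : 1 ≤ ‖x‖ ∧ 2 * R ≤ ‖x‖ ∧ 2 * r ≤ ‖x‖ := by simpa using hx
  rw [norm_norm, ContinuousMap.norm_le _ (by positivity)]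
  intro y
  have hhalf : 1 / 2 * ‖x‖ ≤ ‖(y : E) + x‖ := by
    have hsub : ‖x‖ - ‖(y : E)‖ ≤ ‖(y : E) + x‖ := by
      simpa [add_comm] using norm_sub_le_norm_add x (y : E)
    linarith [hR y y.2]
  calc ‖f (y + x)‖ ≤ c * ‖‖(y : E) + x‖ ^ (-b)‖ := hr (by simp only [mem_ofPred_eq]; linarith)
    _ = c * ‖(y : E) + x‖ ^ (-b) := by rw [Real.norm_of_nonneg (by positivity)]
    _ ≤ c * (1 / 2 * ‖x‖) ^ (-b) := by
        gcongr ?_ * ?_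
        exact Real.rpow_le_rpow_of_nonpos (by positivity) hhalf (by linarith)
    _ = c * (1 / 2) ^ (-b) * ‖‖x‖ ^ (-b)‖ := by
        rw [Real.mul_rpow (by positivity) (by positivity), Real.norm_of_nonneg (by positivity),
          mul_assoc]

lemma isBigO_comp_rpow_neg {V F : Type*} [NormedAddCommGroup V] [NormedSpace ℝ V]
    [NormedAddCommGroup F] {f : V → F} {b : ℝ} (hb : 0 ≤ b)
    (hf : f =O[cocompact V] fun v => ‖v‖ ^ (-b)) (L : V ≃L[ℝ] V) :
    (fun v => f (L v)) =O[cocompact V] fun v => ‖v‖ ^ (-b) := by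
  have hpow : (fun v => ‖v‖ ^ b) =O[cocompact V] fun v => ‖L v‖ ^ b :=
    (L.isBigO_comp_rev (fun v => v) _).norm_norm.rpow hb (.of_forall fun v => norm_nonneg (L v))
  have hinv := hpow.inv_rev (.of_forall fun v hv => by
    simpa [Real.rpow_eq_zero_iff_of_nonneg] using hv)
  simp only [← Real.rpow_neg (norm_nonneg _)] at hinv
  exact (hf.comp_tendsto L.toHomeomorph.isClosedEmbedding.tendsto_cocompact).trans hinv

variable {ι : Type*} [Fintype ι]

lemma LatticeSummable.of_isBigO_rpow {F : Type*} [NormedAddCommGroup F]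
    {f : C(EuclideanSpace ℝ ι, F)} {b : ℝ} (hb : Fintype.card ι < b)
    (hf : f =O[cocompact _] fun x => ‖x‖ ^ (-b)) : LatticeSummable f := fun K =>
  summable_of_isBigO (summable_norm_intVec_rpow (neg_lt_neg hb))
    ((isBigO_norm_restrict_comp_addRight ((Nat.cast_nonneg _).trans_lt hb) hf K).comp_tendsto
      tendsto_intVec_cofinite)

theorem tsum_intVec_eq_tsum_fourier_of_isBigO_rpow {f : EuclideanSpace ℝ ι → ℂ}
    (hcont : Continuous f) {b : ℝ} (hb : Fintype.card ι < b)
    (hf : f =O[cocompact _] fun x => ‖x‖ ^ (-b))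
    (hsum : Summable fun n : ι → ℤ => 𝓕 f (intVec n)) :
    ∑' n : ι → ℤ, f (intVec n) = ∑' n : ι → ℤ, 𝓕 f (intVec n) := by
  have hlattice : LatticeSummable ⟨f, hcont⟩ := .of_isBigO_rpow hb hf
  have hchar (n : ι → ℤ) : UnitAddTorus.mFourier n (toTorus 0) = 1 := by
    simpa using mFourier_neg_toTorus (-n) 0
  simpa [hchar] using hlattice.tsum_eq_tsum_fourier hsum 0

end Decay

section Gaussian

variable {V : Type*} [NormedAddCommGroup V] [InnerProductSpace ℝ V] [FiniteDimensional ℝ V]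

lemma isBigO_cexp_neg_mul_sq_norm_rpow {b : ℂ} (hb : 0 < b.re) (s : ℝ) :
    (fun v : V => cexp (-b * ‖v‖ ^ 2)) =O[cocompact V] fun v => ‖v‖ ^ s := by
  have hreal := (rexp_neg_quadratic_isLittleO_rpow_atTop (neg_lt_zero.2 hb) 0 s).isBigO
  refine (isBigO_of_le _ fun v => ?_).trans
    (hreal.comp_tendsto (tendsto_norm_cocompact_atTop (E := V))).norm_left
  rw [Complex.norm_exp, Function.comp_apply, norm_norm, Real.norm_of_nonneg (Real.exp_pos _).le]
  simp [← ofReal_pow]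

lemma isBigO_cexp_neg_mul_sq_norm_comp {b : ℂ} (hb : 0 < b.re) (L : V ≃L[ℝ] V) {s : ℝ}
    (hs : 0 ≤ s) : (fun v => cexp (-b * ‖L v‖ ^ 2)) =O[cocompact V] fun v => ‖v‖ ^ (-s) :=
  isBigO_comp_rpow_neg hs (isBigO_cexp_neg_mul_sq_norm_rpow hb (-s)) L

section Fourier

variable [MeasurableSpace V] [BorelSpace V]

lemma fourier_comp_continuousLinearEquiv {F : Type*} [NormedAddCommGroup F] [NormedSpace ℂ F]
    (f : V → F) (L : V ≃L[ℝ] V) (w : V) :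
    𝓕 (fun v => f (L v)) w =
      |(L : V →ₗ[ℝ] V).det|⁻¹ • 𝓕 f ((L.symm : V →L[ℝ] V).adjoint w) := by
  have hdet : (L : V →ₗ[ℝ] V).det ≠ 0 := L.toLinearEquiv.isUnit_det'.ne_zero
  have hmap : (volume : Measure V).map L =
      ENNReal.ofReal |((L : V →ₗ[ℝ] V).det)⁻¹| • volume :=
    Measure.map_linearMap_addHaar_eq_smul_addHaar volume hdet
  have hchange := L.toHomeomorph.measurableEmbedding.integral_map (μ := (volume : Measure V))
    fun v => 𝐞 (-inner ℝ (L.symm v) w) • f v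
  simp only [ContinuousLinearEquiv.coe_toHomeomorph, hmap, integral_smul_measure,
    ContinuousLinearEquiv.symm_apply_apply] at hchange
  rw [ENNReal.toReal_ofReal (abs_nonneg _), abs_inv] at hchange
  simp_rw [Real.fourier_eq, ContinuousLinearMap.adjoint_inner_right,
    ContinuousLinearEquiv.coe_coe, hchange]

lemma fourier_gaussian_comp_continuousLinearEquiv {b : ℂ} (hb : 0 < b.re) (L : V ≃L[ℝ] V) (w : V) :
    𝓕 (fun v => cexp (-b * ‖L v‖ ^ 2)) w = |(L : V →ₗ[ℝ] V).det|⁻¹ *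
      ((π / b) ^ (Module.finrank ℝ V / 2 : ℂ) *
        cexp (-π ^ 2 * ‖(L.symm : V →L[ℝ] V).adjoint w‖ ^ 2 / b)) := by
  rw [fourier_comp_continuousLinearEquiv (fun v => cexp (-b * ‖v‖ ^ 2)),
    fourier_gaussian_innerProductSpace hb, real_smul, ofReal_inv]

end Fourier

end Gaussian

section PosDef

variable {ι : Type*} [Fintype ι] [DecidableEq ι]

lemma norm_sq_toEuclideanCLM (B : Matrix ι ι ℝ) (x : EuclideanSpace ℝ ι) :
    ‖Matrix.toEuclideanCLM (𝕜 := ℝ) B x‖ ^ 2 = x.ofLp ⬝ᵥ (Bᴴ * B) *ᵥ x.ofLp := by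
  rw [← real_inner_self_eq_norm_sq, ← ContinuousLinearMap.adjoint_inner_right,
    ← ContinuousLinearMap.star_eq_adjoint, ← map_star, ← mul_apply_eq_comp, ← map_mul,
    Matrix.inner_toEuclideanCLM, Matrix.star_eq_conjTranspose]

open scoped MatrixOrder in
lemma exists_continuousLinearEquiv_of_posDef {A : Matrix ι ι ℝ} (hA : A.PosDef) :
    ∃ L : EuclideanSpace ℝ ι ≃L[ℝ] EuclideanSpace ℝ ι,
      (∀ x, ‖L x‖ ^ 2 = x.ofLp ⬝ᵥ A *ᵥ x.ofLp) ∧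
      (∀ x, ‖(L.symm : EuclideanSpace ℝ ι →L[ℝ] EuclideanSpace ℝ ι).adjoint x‖ ^ 2 =
        x.ofLp ⬝ᵥ A⁻¹ *ᵥ x.ofLp) ∧
      |(L : EuclideanSpace ℝ ι →ₗ[ℝ] EuclideanSpace ℝ ι).det| = √A.det := by
  obtain ⟨_, ⟨B, rfl⟩, hB⟩ :=
    CStarAlgebra.isStrictlyPositive_iff_eq_star_mul_self.1 hA.isStrictlyPositive
  let L := ContinuousLinearEquiv.unitsEquiv ℝ (EuclideanSpace ℝ ι)
    (Units.map (Matrix.toEuclideanCLM (n := ι) (𝕜 := ℝ) : _ →* _) B)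
  have hL (x) : L x = Matrix.toEuclideanCLM (𝕜 := ℝ) B.val x := rfl
  have hLsymm : (L.symm : EuclideanSpace ℝ ι →L[ℝ] EuclideanSpace ℝ ι) =
      Matrix.toEuclideanCLM (𝕜 := ℝ) B.val⁻¹ := by
    rw [← Matrix.coe_units_inv]
    rfl
  have hLdet : (L : EuclideanSpace ℝ ι →ₗ[ℝ] EuclideanSpace ℝ ι).det = B.val.det := by
    rw [← LinearMap.det_toLin (PiLp.basisFun 2 ℝ ι), ← Matrix.toLpLin_eq_toLin]
    rfl
  rw [Matrix.star_eq_conjTranspose] at hB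
  refine ⟨L, fun x => ?_, fun x => ?_, ?_⟩
  · rw [hL, norm_sq_toEuclideanCLM, hB]
  · rw [hLsymm, ← ContinuousLinearMap.star_eq_adjoint, ← map_star, norm_sq_toEuclideanCLM, hB,
      Matrix.mul_inv_rev, Matrix.star_eq_conjTranspose, Matrix.conjTranspose_conjTranspose,
      Matrix.conjTranspose_nonsing_inv]
  · rw [hLdet, hB, Matrix.det_mul, Matrix.det_conjTranspose, star_trivial,
      Real.sqrt_mul_self_eq_abs]

end PosDef

section RealTheta

variable {ι : Type*} [Fintype ι]

/-- The theta series `∑ₙ e^{πiτ nᵀAn}` over `n ∈ ℤ^ι` of a real matrix `A`. Unlike integral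
matrices of determinant one, real positive definite matrices are closed under inversion, which is
the generality in which Poisson summation applies. -/
def realThetaSeries (A : Matrix ι ι ℝ) (τ : ℂ) : ℂ :=
  ∑' n : ι → ℤ, cexp (π * I * τ * ((intVec n).ofLp ⬝ᵥ A *ᵥ (intVec n).ofLp : ℝ))

lemma norm_cexp_pi_mul_I_mul (τ : ℂ) (q : ℝ) :
    ‖cexp (π * I * τ * q)‖ = rexp (-(π * τ.im) * q) := by
  simp [Complex.norm_exp]

variable {A : Matrix ι ι ℝ}

lemma norm_cexp_pi_mul_I_mul_le (hA : A.PosDef) {a : ℝ} {τ : ℂ} (hτ : a ≤ τ.im)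
    (x : ι → ℝ) : ‖cexp (π * I * τ * (x ⬝ᵥ A *ᵥ x : ℝ))‖ ≤ rexp (-(π * a) * (x ⬝ᵥ A *ᵥ x)) := by
  have hquad : 0 ≤ x ⬝ᵥ A *ᵥ x := by simpa using hA.posSemidef.dotProduct_mulVec_nonneg x
  rw [norm_cexp_pi_mul_I_mul]
  gcongr

lemma summable_rexp_neg_mul_quadratic (hA : A.PosDef) {c : ℝ} (hc : 0 < c) :
    Summable fun n : ι → ℤ => rexp (-c * ((intVec n).ofLp ⬝ᵥ A *ᵥ (intVec n).ofLp)) := by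
  classical
  obtain ⟨L, hL, -⟩ := exists_continuousLinearEquiv_of_posDef hA
  have hdecay := (isBigO_cexp_neg_mul_sq_norm_comp (b := c) (by simpa) L
    (s := Fintype.card ι + 1) (by positivity)).comp_tendsto tendsto_intVec_cofinite
  refine summable_of_isBigO (summable_norm_intVec_rpow (by simp)) (hdecay.norm_left.congr_left ?_)
  intro n
  rw [Function.comp_apply, ← ofReal_pow, hL]
  simp [Complex.norm_exp]

lemma summable_norm_realThetaSeries (hA : A.PosDef) {τ : ℂ} (hτ : 0 < τ.im) :
    Summable fun n : ι → ℤ =>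
      ‖cexp (π * I * τ * ((intVec n).ofLp ⬝ᵥ A *ᵥ (intVec n).ofLp : ℝ))‖ :=
  (summable_rexp_neg_mul_quadratic hA (by positivity)).of_nonneg_of_le (fun _ => norm_nonneg _)
    fun n => norm_cexp_pi_mul_I_mul_le hA le_rfl (intVec n).ofLp

lemma differentiableOn_realThetaSeries (hA : A.PosDef) :
    DifferentiableOn ℂ (realThetaSeries A) {τ | 0 < τ.im} := by
  intro τ (hτ : 0 < τ.im)
  have hopen : IsOpen {z : ℂ | τ.im / 2 < z.im} := isOpen_lt continuous_const continuous_im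
  have hdiff : DifferentiableOn ℂ (realThetaSeries A) {z | τ.im / 2 < z.im} :=
    differentiableOn_tsum_of_summable_norm
      (summable_rexp_neg_mul_quadratic hA (by positivity : 0 < π * (τ.im / 2)))
      (fun n => by fun_prop) hopen
      fun n z hz => norm_cexp_pi_mul_I_mul_le hA (le_of_lt hz) (intVec n).ofLp
  exact (hdiff.differentiableAt (hopen.mem_nhds (half_lt_self hτ))).differentiableWithinAt

lemma exists_norm_realThetaSeries_le (hA : A.PosDef) {a : ℝ} (ha : 0 < a) :
    ∃ C, ∀ τ : ℂ, a ≤ τ.im → ‖realThetaSeries A τ‖ ≤ C :=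
  ⟨_, fun _ hτ => tsum_of_norm_bounded
    (summable_rexp_neg_mul_quadratic hA (by positivity : 0 < π * a)).hasSum
    fun n => norm_cexp_pi_mul_I_mul_le hA hτ (intVec n).ofLp⟩

lemma ne_zero_of_im_pos {τ : ℂ} (hτ : 0 < τ.im) : τ ≠ 0 := fun h => by simp [h] at hτ

lemma neg_one_div_im_pos {τ : ℂ} (hτ : 0 < τ.im) : 0 < (-1 / τ).im := by
  rw [neg_div, one_div, neg_im, inv_im, neg_div, neg_neg]
  exact div_pos hτ (normSq_pos.2 (ne_zero_of_im_pos hτ))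

variable [DecidableEq ι]

theorem realThetaSeries_eq_mul_realThetaSeries_inv (hA : A.PosDef) {τ : ℂ} (hτ : 0 < τ.im) :
    realThetaSeries A τ =
      (√A.det : ℂ)⁻¹ * (I / τ) ^ (Fintype.card ι / 2 : ℂ) * realThetaSeries A⁻¹ (-1 / τ) := by
  obtain ⟨L, hL, hLadj, hLdet⟩ := exists_continuousLinearEquiv_of_posDef hA
  have hτ0 := ne_zero_of_im_pos hτ
  have hpi : (π : ℂ) ≠ 0 := ofReal_ne_zero.2 Real.pi_ne_zero
  have hscale : π / -(π * I * τ) = I / τ := by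
    field_simp
    simp
  have hexponent (q : ℂ) : -π ^ 2 * q / -(π * I * τ) = π * I * (-1 / τ) * q := by
    field_simp
    simp
  have hb : 0 < (-(π * I * τ)).re := by simpa using mul_pos Real.pi_pos hτ
  set f : EuclideanSpace ℝ ι → ℂ := fun v => cexp (-(-(π * I * τ)) * ‖L v‖ ^ 2) with hf
  have hfourier (n : ι → ℤ) : 𝓕 f (intVec n) =
      (√A.det : ℂ)⁻¹ * (I / τ) ^ (Fintype.card ι / 2 : ℂ) *
        cexp (π * I * (-1 / τ) * ((intVec n).ofLp ⬝ᵥ A⁻¹ *ᵥ (intVec n).ofLp : ℝ)) := by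
    rw [fourier_gaussian_comp_continuousLinearEquiv hb, hLdet, ← hLadj, ofReal_pow,
      finrank_euclideanSpace, ofReal_inv, hscale, hexponent, ← mul_assoc]
  have hdecay : f =O[cocompact _] fun v => ‖v‖ ^ (-(Fintype.card ι + 1 : ℝ)) :=
    isBigO_cexp_neg_mul_sq_norm_comp hb L (by positivity)
  have hsum : Summable fun n : ι → ℤ => 𝓕 f (intVec n) := by
    simp only [hfourier]
    exact (summable_norm_realThetaSeries hA.inv (neg_one_div_im_pos hτ)).of_norm.mul_left _
  calc realThetaSeries A τ = ∑' n : ι → ℤ, f (intVec n) := by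
        simp only [realThetaSeries, hf, neg_neg, ← ofReal_pow, hL]
    _ = ∑' n : ι → ℤ, 𝓕 f (intVec n) :=
        tsum_intVec_eq_tsum_fourier_of_isBigO_rpow (by fun_prop) (lt_add_one _) hdecay hsum
    _ = _ := by simp only [hfourier, tsum_mul_left, realThetaSeries]

lemma realThetaSeries_transpose_mul_mul (A : Matrix ι ι ℝ) {U : Matrix ι ι ℤ} (hU : IsUnit U)
    (τ : ℂ) :
    realThetaSeries ((U.map (Int.cast : ℤ → ℝ))ᵀ * A * U.map (Int.cast : ℤ → ℝ)) τ =
      realThetaSeries A τ := by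
  have hbij : Function.Bijective U.mulVec :=
    ⟨Matrix.mulVec_injective_of_isUnit hU, Matrix.mulVec_surjective_iff_isUnit.2 hU⟩
  refine (tsum_congr fun n => ?_).trans ((Equiv.ofBijective _ hbij).tsum_eq _)
  rw [Equiv.ofBijective_apply, ofLp_intVec_mulVec, ← Matrix.mulVec_mulVec, ← Matrix.mulVec_mulVec,
    Matrix.dotProduct_mulVec _ (U.map _)ᵀ, Matrix.vecMul_transpose]

end RealTheta

section EvenUnimodular

lemma even_dotProduct_mulVec {ι : Type*} [Fintype ι] {S : Matrix ι ι ℤ} (hsymm : S.IsSymm)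
    (hdiag : ∀ i, Even (S i i)) (x : ι → ℤ) : Even (x ⬝ᵥ S *ᵥ x) := by
  have hexpand : x ⬝ᵥ S *ᵥ x = ∑ p : ι × ι, x p.1 * (S p.1 p.2 * x p.2) := by
    simp [dotProduct, Matrix.mulVec, Fintype.sum_prod_type, Finset.mul_sum]
  rw [← ZMod.intCast_eq_zero_iff_even, hexpand, Int.cast_sum]
  -- Modulo 2, the terms at `(i, j)` and `(j, i)` cancel and those at `(i, i)` vanish.
  refine Finset.sum_involution (fun p _ => p.swap) ?_ ?_ (fun _ _ => Finset.mem_univ _)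
    (fun p _ => p.swap_swap)
  · rintro ⟨i, j⟩ -
    rw [← Int.cast_add, ZMod.intCast_eq_zero_iff_even, Prod.fst_swap, Prod.snd_swap,
      hsymm.apply i j]
    exact ⟨x i * (S i j * x j), by ring⟩
  · rintro ⟨i, j⟩ - hne heq
    obtain rfl : j = i := congrArg Prod.fst heq
    exact hne ((ZMod.intCast_eq_zero_iff_even).2 (((hdiag j).mul_right _).mul_left _))

lemma intCast_dotProduct_mulVec {ι : Type*} [Fintype ι] (S : Matrix ι ι ℤ) (x : ι → ℤ) :
    ((x ⬝ᵥ S *ᵥ x : ℤ) : ℝ) =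
      (intVec x).ofLp ⬝ᵥ S.map (Int.cast : ℤ → ℝ) *ᵥ (intVec x).ofLp := by
  rw [← ofLp_intVec_mulVec]
  exact RingHom.map_dotProduct (Int.castRingHom ℝ) x (S *ᵥ x)

variable {m : ℕ} {S : Matrix (Fin m) (Fin m) ℤ}

lemma thetaSeries_eq_realThetaSeries (S : Matrix (Fin m) (Fin m) ℤ) :
    thetaSeries S = realThetaSeries (S.map (Int.cast : ℤ → ℝ)) := by
  funext τ
  simp only [thetaSeries, realThetaSeries, ← intCast_dotProduct_mulVec, ofReal_intCast]

namespace IsPosDefEvenUnimodular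

lemma thetaSeries_add_one (hS : IsPosDefEvenUnimodular S) (τ : ℂ) :
    thetaSeries S (τ + 1) = thetaSeries S τ := by
  obtain ⟨hsymm, -, -, hdiag⟩ := hS
  refine tsum_congr fun x => ?_
  obtain ⟨k, hk⟩ := even_dotProduct_mulVec hsymm hdiag x
  refine Complex.exp_eq_exp_iff_exists_int.2 ⟨k, ?_⟩
  rw [hk]
  push_cast
  ring

lemma det_map_intCast (hS : IsPosDefEvenUnimodular S) : (S.map (Int.cast : ℤ → ℝ)).det = 1 := by
  simpa [hS.2.2.1] using ((Int.castRingHom ℝ).map_det S).symm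

lemma realThetaSeries_inv (hS : IsPosDefEvenUnimodular S) (τ : ℂ) :
    realThetaSeries (S.map (Int.cast : ℤ → ℝ))⁻¹ τ =
      realThetaSeries (S.map (Int.cast : ℤ → ℝ)) τ := by
  obtain ⟨hsymm, -, hdet, -⟩ := id hS
  have hU : IsUnit S := (Matrix.isUnit_iff_isUnit_det S).2 (hdet ▸ isUnit_one)
  rw [← realThetaSeries_transpose_mul_mul _ hU, ← Matrix.transpose_map, hsymm.eq,
    Matrix.mul_nonsing_inv _ (by simp [hS.det_map_intCast]), Matrix.one_mul]

lemma thetaSeries_neg_one_div (hS : IsPosDefEvenUnimodular S) (hm : 8 ∣ m) {τ : ℂ}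
    (hτ : 0 < τ.im) : thetaSeries S (-1 / τ) = τ ^ (m / 2) * thetaSeries S τ := by
  have hτ0 := ne_zero_of_im_pos hτ
  obtain ⟨k, rfl⟩ := hm
  have hexp : ((8 * k : ℕ) / 2 : ℂ) = (4 * k : ℕ) := by
    push_cast
    ring
  have hI : (I / τ) ^ (4 * k) = (τ ^ (8 * k / 2))⁻¹ := by
    rw [div_pow, pow_mul I, I_pow_four, one_pow, one_div, show 8 * k / 2 = 4 * k by lia]
  have hinversion := realThetaSeries_eq_mul_realThetaSeries_inv hS.2.1 hτ
  rw [hS.realThetaSeries_inv, hS.det_map_intCast, Fintype.card_fin, hexp, cpow_natCast, hI]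
    at hinversion
  rw [thetaSeries_eq_realThetaSeries, hinversion]
  simp [hτ0]

end IsPosDefEvenUnimodular

end EvenUnimodular

section Modular

open UpperHalfPlane ModularGroup ModularForm

variable {f : ℂ → ℂ} {k : ℕ}

lemma slash_eq_self_of_add_one_of_neg_one_div (hT : ∀ τ : ℂ, 0 < τ.im → f (τ + 1) = f τ)
    (hS : ∀ τ : ℂ, 0 < τ.im → f (-1 / τ) = τ ^ k * f τ) (γ : SL(2, ℤ)) :
    (fun z : ℍ => f z) ∣[(k : ℤ)] γ = fun z : ℍ => f z := by
  refine SlashInvariantForm.slash_action_generators_SL2Z ?_ ?_ γ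
  · ext z
    have hinv : (-(z : ℂ))⁻¹ = -1 / z := by rw [← neg_inv, neg_div, one_div]
    rw [SlashInvariantForm.slash_S_apply]
    simp only [hinv]
    rw [hS z z.im_pos, zpow_neg, zpow_natCast]
    field_simp [z.ne_zero]
  · ext z
    rw [SL_slash_apply, modular_T_smul]
    simp only [denom_apply, coe_vadd, ofReal_one]
    rw [add_comm, hT z z.im_pos]
    simp [T]

theorem apply_moebius_eq_of_add_one_of_neg_one_div
    (hT : ∀ τ : ℂ, 0 < τ.im → f (τ + 1) = f τ)
    (hS : ∀ τ : ℂ, 0 < τ.im → f (-1 / τ) = τ ^ k * f τ) (γ : SL(2, ℤ)) {τ : ℂ} (hτ : 0 < τ.im) :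
    f ((γ 0 0 * τ + γ 0 1) / (γ 1 0 * τ + γ 1 1)) = (γ 1 0 * τ + γ 1 1) ^ k * f τ := by
  have h := congrFun (slash_eq_self_of_add_one_of_neg_one_div hT hS γ) ⟨τ, hτ⟩
  rw [SL_slash_apply, zpow_neg, zpow_natCast,
    mul_inv_eq_iff_eq_mul₀ (pow_ne_zero _ (denom_ne_zero _ _)), denom_apply,
    coe_specialLinearGroup_apply, mul_comm (f _)] at h
  simpa using h

end Modular

/-- For `8 ∣ m` and `S` a positive definite even unimodular `m × m` matrix, the theta
series `θ_S` is a modular form of weight `m/2` for `SL₂(ℤ)`: the defining series converges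
absolutely on `ℍ`, `θ_S` is holomorphic on `ℍ`, transforms with weight `m/2` under
`SL₂(ℤ)`, and is bounded as `Im τ → ∞`. -/
theorem thetaSeries_isModularForm (m : ℕ) (hm : 0 < m) (hm8 : 8 ∣ m)
    (S : Matrix (Fin m) (Fin m) ℤ) (hS : IsPosDefEvenUnimodular S) :
    (∀ τ ∈ UHP,
        Summable (fun x : Fin m → ℤ => ‖Complex.exp (π * I * τ * ((x ⬝ᵥ S.mulVec x : ℤ) : ℂ))‖)) ∧
    DifferentiableOn ℂ (thetaSeries S) UHP ∧
    (∀ γ : SL(2, ℤ), ∀ τ ∈ UHP,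
        thetaSeries S ((((γ.1 0 0 : ℤ) : ℂ) * τ + ((γ.1 0 1 : ℤ) : ℂ)) /
            (((γ.1 1 0 : ℤ) : ℂ) * τ + ((γ.1 1 1 : ℤ) : ℂ)))
          = (((γ.1 1 0 : ℤ) : ℂ) * τ + ((γ.1 1 1 : ℤ) : ℂ)) ^ (m / 2) * thetaSeries S τ) ∧
    (∃ C A : ℝ, ∀ τ ∈ UHP, A ≤ τ.im → ‖thetaSeries S τ‖ ≤ C) := by
  obtain ⟨C, hC⟩ := exists_norm_realThetaSeries_le hS.2.1 one_pos
  refine ⟨fun τ hτ => ?_, ?_, fun γ τ hτ => ?_, C, 1, fun τ _ hτ => ?_⟩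
  · simpa only [← intCast_dotProduct_mulVec, ofReal_intCast] using
      summable_norm_realThetaSeries hS.2.1 hτ
  · rw [thetaSeries_eq_realThetaSeries]
    exact differentiableOn_realThetaSeries hS.2.1
  · exact apply_moebius_eq_of_add_one_of_neg_one_div (fun z _ => hS.thetaSeries_add_one z)
      (fun z hz => hS.thetaSeries_neg_one_div hm8 hz) γ hτ
  · rw [thetaSeries_eq_realThetaSeries]
    exact hC τ hτ

end
end
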